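/- arXiv:1702.07868 — 15 statements merged into one kernel-verified Lean document; each statement's English description precedes it below -/
import Mathlib

section
/- Let x* ∈ (−R, R) with x* ≠ r₀. Then (x*, 0) is a critical point of X if and only if x*·a(x*)·b(x*) = λ, where λ = c·(r₀ − R²/r₀). -/
/-- for `x* ∈ (−R, R)` with `x* ≠ r₀`, the point `(x*, 0)` is a critical
point of the vortex vector field `X` if and only if `x*·a(x*)·b(x*) = λ`, where
`λ = c·(r₀ − R²/r₀)`. -/
theorem critical_point_on_axis_iff
    (R r₀ θ₀ Γ : ℝ)
    (hR : 0 < R) (hr₀ : 0 < r₀) (hrR : r₀ < R) (hθ : θ₀ ≠ 0) (hΓ : Γ ≠ 0)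
    (c : ℝ) (hc : c = Γ / (2 * Real.pi * θ₀))
    (X : ℝ → ℝ → ℝ × ℝ)
    (hX : ∀ x y : ℝ, X x y =
      (-θ₀ * y + c * θ₀ * y *
          (1 / ((x - r₀) ^ 2 + y ^ 2) - 1 / ((x - R ^ 2 / r₀) ^ 2 + y ^ 2)),
       θ₀ * x - c * θ₀ *
          ((x - r₀) / ((x - r₀) ^ 2 + y ^ 2) -
            (x - R ^ 2 / r₀) / ((x - R ^ 2 / r₀) ^ 2 + y ^ 2))))
    (x : ℝ) (hx₁ : -R < x) (hx₂ : x < R) (hx₃ : x ≠ r₀) :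
    X x 0 = (0, 0) ↔ x * (x - r₀) * (x - R ^ 2 / r₀) = c * (r₀ - R ^ 2 / r₀) := by
  have hB : R < R ^ 2 / r₀ := by
    rw [lt_div_iff₀ hr₀]; nlinarith
  have ha : x - r₀ ≠ 0 := sub_ne_zero.mpr hx₃
  have hb : x - R ^ 2 / r₀ ≠ 0 := by
    intro h; linarith
  have key : r₀ - R ^ 2 / r₀ = (x - R ^ 2 / r₀) - (x - r₀) := by ring
  rw [hX, key]
  generalize x - R ^ 2 / r₀ = b at *
  generalize x - r₀ = a at *
  have h2 : θ₀ * x - c * θ₀ * (a / (a ^ 2 + 0 ^ 2) - b / (b ^ 2 + 0 ^ 2))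
      = θ₀ / (a * b) * (x * a * b - c * (b - a)) := by
    have e1 : a ^ 2 + (0 : ℝ) ^ 2 = a * a := by ring
    have e2 : b ^ 2 + (0 : ℝ) ^ 2 = b * b := by ring
    rw [e1, e2]
    field_simp
  rw [Prod.mk.injEq, h2]
  have h3 : θ₀ / (a * b) ≠ 0 := div_ne_zero hθ (mul_ne_zero ha hb)
  constructor
  · rintro ⟨-, h⟩
    exact sub_eq_zero.mp ((mul_eq_zero.mp h).resolve_left h3)
  · intro h
    refine ⟨by ring, ?_⟩
    rw [h, sub_self, mul_zero]
end

section
/- Assume c < 0. If (x, y) satisfies x² + y² ≤ R² and y ≠ 0, then X(x, y) ≠ 0. In other words, when the vortex strength and the angular velocity have opposite signs, every critical point of X in the closed disk D_R of radius R lies on the horizontal axis {y = 0}. -/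
/-- if `c < 0` (vortex strength and angular velocity of opposite signs),
then `X` has no critical points off the horizontal axis inside the closed disk `D_R`. -/
theorem no_offaxis_critical_points_of_c_neg
    (R r₀ θ₀ Γ : ℝ)
    (hR : 0 < R) (hr₀ : 0 < r₀) (hrR : r₀ < R) (hθ : θ₀ ≠ 0) (hΓ : Γ ≠ 0)
    (c : ℝ) (hc : c = Γ / (2 * Real.pi * θ₀)) (hcneg : c < 0)
    (X : ℝ → ℝ → ℝ × ℝ)
    (hX : ∀ x y : ℝ, X x y =
      (-θ₀ * y + c * θ₀ * y *
          (1 / ((x - r₀) ^ 2 + y ^ 2) - 1 / ((x - R ^ 2 / r₀) ^ 2 + y ^ 2)),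
       θ₀ * x - c * θ₀ *
          ((x - r₀) / ((x - r₀) ^ 2 + y ^ 2) -
            (x - R ^ 2 / r₀) / ((x - R ^ 2 / r₀) ^ 2 + y ^ 2))))
    (x y : ℝ) (hdisk : x ^ 2 + y ^ 2 ≤ R ^ 2) (hy : y ≠ 0) :
    X x y ≠ (0, 0) := by
  intro h
  rw [hX] at h
  have h1 := (Prod.mk.inj h).1
  clear h hX
  obtain ⟨b, hb⟩ : ∃ b, b = R ^ 2 / r₀ := ⟨_, rfl⟩
  rw [← hb] at h1
  have hbr : b * r₀ = R ^ 2 := by rw [hb]; field_simp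
  have hbR : R < b := by
    rw [hb, lt_div_iff₀ hr₀]; nlinarith
  have hxR : x ≤ R := by nlinarith [sq_nonneg y]
  have hsum : 2 * R ≤ r₀ + b := by
    nlinarith [sq_nonneg (r₀ - b)]
  have hy2 : 0 < y ^ 2 := by positivity
  have hA : 0 < (x - r₀) ^ 2 + y ^ 2 := by positivity
  have hAB : (x - r₀) ^ 2 + y ^ 2 ≤ (x - b) ^ 2 + y ^ 2 := by
    nlinarith [mul_nonneg (by linarith : 0 ≤ b - r₀) (by linarith : 0 ≤ r₀ + b - 2 * x)]
  have hd := one_div_le_one_div_of_le hA hAB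
  have h2 : θ₀ * y * (-1 + c * (1 / ((x - r₀) ^ 2 + y ^ 2) - 1 / ((x - b) ^ 2 + y ^ 2))) = 0 := by
    linear_combination h1
  have h3 := (mul_eq_zero.mp h2).resolve_left (mul_ne_zero hθ hy)
  have h4 := mul_nonneg (neg_pos.mpr hcneg).le (sub_nonneg.mpr hd)
  linarith
end

section
/- Assume c > 0. If (x, y) satisfies x² + y² ≤ R², y ≠ 0 and X(x, y) = 0, then x = x_s* := (R² + r₀²)/(2r₀) − (c/(2r₀))·(1 − r₀²/R²), y² = (1/4)·(2(c² + R⁴)/R² − (c − R²)²/r₀² − (c + R²)²·r₀²/R⁴), and moreover x² + y² = R², so every critical point of X off the horizontal axis lies on the boundary circle of the disk of radius R. -/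
/-- if `c > 0`, every critical point of `X` in the closed disk `D_R`
lying off the horizontal axis has the explicit coordinates `(x_s*, ±y_s*)` and lies
on the boundary circle. -/
theorem offaxis_critical_points_on_boundary_of_c_pos
    (R r₀ θ₀ Γ : ℝ)
    (hR : 0 < R) (hr₀ : 0 < r₀) (hrR : r₀ < R) (hθ : θ₀ ≠ 0) (hΓ : Γ ≠ 0)
    (c : ℝ) (hc : c = Γ / (2 * Real.pi * θ₀)) (hcpos : 0 < c)
    (X : ℝ → ℝ → ℝ × ℝ)
    (hX : ∀ x y : ℝ, X x y =
      (-θ₀ * y + c * θ₀ * y *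
          (1 / ((x - r₀) ^ 2 + y ^ 2) - 1 / ((x - R ^ 2 / r₀) ^ 2 + y ^ 2)),
       θ₀ * x - c * θ₀ *
          ((x - r₀) / ((x - r₀) ^ 2 + y ^ 2) -
            (x - R ^ 2 / r₀) / ((x - R ^ 2 / r₀) ^ 2 + y ^ 2))))
    (x y : ℝ) (hdisk : x ^ 2 + y ^ 2 ≤ R ^ 2) (hy : y ≠ 0)
    (hcrit : X x y = (0, 0)) :
    x = (R ^ 2 + r₀ ^ 2) / (2 * r₀) - (c / (2 * r₀)) * (1 - r₀ ^ 2 / R ^ 2) ∧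
    y ^ 2 = (1 / 4) * (2 * (c ^ 2 + R ^ 4) / R ^ 2 - (c - R ^ 2) ^ 2 / r₀ ^ 2 -
      (c + R ^ 2) ^ 2 * r₀ ^ 2 / R ^ 4) ∧
    x ^ 2 + y ^ 2 = R ^ 2 := by
  have hy2 : 0 < y ^ 2 := by positivity
  have hA : 0 < (x - r₀) ^ 2 + y ^ 2 := by positivity
  have hB : 0 < (x - R ^ 2 / r₀) ^ 2 + y ^ 2 := by positivity
  rw [hX, Prod.mk.injEq] at hcrit
  obtain ⟨h1, h2⟩ := hcrit
  obtain ⟨s, hs⟩ : ∃ s, s = R ^ 2 / r₀ := ⟨_, rfl⟩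
  have hsr : s * r₀ = R ^ 2 := by rw [hs]; field_simp
  rw [← hs] at h1 h2 hB
  obtain ⟨A, hAd⟩ : ∃ A, A = (x - r₀) ^ 2 + y ^ 2 := ⟨_, rfl⟩
  obtain ⟨B, hBd⟩ : ∃ B, B = (x - s) ^ 2 + y ^ 2 := ⟨_, rfl⟩
  rw [← hAd] at h1 h2 hA
  rw [← hBd] at h1 h2 hB
  have e1 : c * (1 / A - 1 / B) = 1 := by
    have : θ₀ * y * (c * (1 / A - 1 / B) - 1) = 0 := by linear_combination h1
    have h3 := (mul_eq_zero.mp this).resolve_left (mul_ne_zero hθ hy)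
    linarith
  have e2 : r₀ / A - s / B = 0 := by
    have : θ₀ * c * (r₀ / A - s / B) = 0 := by
      linear_combination h2 + θ₀ * x * e1
    exact (mul_eq_zero.mp this).resolve_left (mul_ne_zero hθ hcpos.ne')
  have e3 : r₀ * B = s * A := by
    field_simp at e2
    linarith
  have hlt : 0 < R ^ 2 - r₀ ^ 2 := by nlinarith
  have hrho : x ^ 2 + y ^ 2 = R ^ 2 := by
    have : (R ^ 2 - r₀ ^ 2) * (x ^ 2 + y ^ 2 - R ^ 2) = 0 := by
      rw [← hsr]
      rw [hAd, hBd] at e3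
      linear_combination -r₀ * e3
    have h3 := (mul_eq_zero.mp this).resolve_left hlt.ne'
    linarith
  have e4 : c * (B - A) = A * B := by
    field_simp at e1
    linarith
  have e5 : c * (R ^ 2 - r₀ ^ 2) = A * R ^ 2 := by
    have h5 : r₀ ^ 2 * B = R ^ 2 * A := by rw [← hsr]; linear_combination r₀ * e3
    have : A * (c * (R ^ 2 - r₀ ^ 2) - A * R ^ 2) = 0 := by
      linear_combination r₀ ^ 2 * e4 + (A - c) * h5
    have h3 := (mul_eq_zero.mp this).resolve_left hA.ne'
    linarith
  have e6 : A = R ^ 2 + r₀ ^ 2 - 2 * x * r₀ := by rw [hAd, ← hrho]; ring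
  have hx : x = (R ^ 2 + r₀ ^ 2) / (2 * r₀) - (c / (2 * r₀)) * (1 - r₀ ^ 2 / R ^ 2) := by
    rw [e6] at e5
    field_simp
    linear_combination e5
  refine ⟨hx, ?_, hrho⟩
  have : y ^ 2 = R ^ 2 - x ^ 2 := by linarith
  rw [this, hx]
  field_simp
  ring
end

section
/- Assume φ₀ > 0, and set x_s* = (R² + r₀²)/(2r₀) − (c/(2r₀))·(1 − r₀²/R²). Then x_s* ∈ (−R, R) if and only if ρ₀ > max{(1 − φ₀)/(1 + φ₀), (φ₀ − 1)/(1 + φ₀)}. -/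
/-- for `φ₀ > 0`, the abscissa `x_s*` of the off-axis equilibria lies in
`(−R, R)` if and only if `ρ₀ > max{(1 − φ₀)/(1 + φ₀), (φ₀ − 1)/(1 + φ₀)}`. -/
theorem xs_in_disk_iff
    (R r₀ θ₀ Γ : ℝ)
    (hR : 0 < R) (hr₀ : 0 < r₀) (hrR : r₀ < R) (hθ : θ₀ ≠ 0) (hΓ : Γ ≠ 0)
    (c ρ₀ φ₀ : ℝ) (hc : c = Γ / (2 * Real.pi * θ₀))
    (hρ : ρ₀ = r₀ / R) (hφ : φ₀ = R ^ 2 / c) (hφpos : 0 < φ₀)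
    (xs : ℝ)
    (hxs : xs = (R ^ 2 + r₀ ^ 2) / (2 * r₀) - (c / (2 * r₀)) * (1 - r₀ ^ 2 / R ^ 2)) :
    (-R < xs ∧ xs < R) ↔
      max ((1 - φ₀) / (1 + φ₀)) ((φ₀ - 1) / (1 + φ₀)) < ρ₀ := by
  have hcne : c ≠ 0 := by
    rintro rfl
    simp [hφ] at hφpos
  have hcφ : c = R ^ 2 / φ₀ := by
    rw [hφ]; field_simp
  have hr : r₀ = ρ₀ * R := by
    rw [hρ]; field_simp
  have hρpos : 0 < ρ₀ := by rw [hρ]; positivity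
  have hρ1 : ρ₀ < 1 := by rw [hρ, div_lt_one hR]; exact hrR
  clear hφ hρ hc
  subst hr
  subst hcφ
  have h1 : R - xs = R * (1 - ρ₀) / (2 * ρ₀ * φ₀) * (ρ₀ * (1 + φ₀) - (φ₀ - 1)) := by
    rw [hxs]; field_simp; ring
  have h2 : xs - -R = R * (1 + ρ₀) / (2 * ρ₀ * φ₀) * (ρ₀ * (1 + φ₀) - (1 - φ₀)) := by
    rw [hxs]; field_simp; ring
  have p1 : 0 < R * (1 - ρ₀) / (2 * ρ₀ * φ₀) := by
    have : 0 < 1 - ρ₀ := by linarith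
    positivity
  have p2 : 0 < R * (1 + ρ₀) / (2 * ρ₀ * φ₀) := by positivity
  have p3 : 0 < 1 + φ₀ := by linarith
  rw [max_lt_iff, div_lt_iff₀ p3, div_lt_iff₀ p3, ← sub_pos (b := -R), ← sub_pos (b := xs),
    h1, h2, mul_pos_iff_of_pos_left p1, mul_pos_iff_of_pos_left p2, sub_pos, sub_pos]
end

section
/- Assume φ₀ > 0 and ρ₀ > max{(1 − φ₀)/(1 + φ₀), (φ₀ − 1)/(1 + φ₀)}, and let (x_s*, y_s*) with y_s* > 0 be the off-axis critical point of X on the boundary circle, where x_s* = (R² + r₀²)/(2r₀) − (c/(2r₀))·(1 − r₀²/R²) and (y_s*)² = (1/4)·(2(c² + R⁴)/R² − (c − R²)²/r₀² − (c + R²)²·r₀²/R⁴). Then the determinant of the Jacobian matrix of X at (x_s*, ±y_s*) equals (cR − R³ − (c + R²)r₀)·(cR − R³ + (c + R²)r₀)·θ₀² / (c²·(R² − r₀²)), and this value is negative; in particular (x_s*, ±y_s*) are hyperbolic saddles. -/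
/-- The Jacobian matrix of a planar vector field `X : ℝ → ℝ → ℝ × ℝ` at the point `(x, y)`. -/
noncomputable def jacobianMatrix (X : ℝ → ℝ → ℝ × ℝ) (x y : ℝ) : Matrix (Fin 2) (Fin 2) ℝ :=
  !![deriv (fun s => (X s y).1) x, deriv (fun s => (X x s).1) y;
     deriv (fun s => (X s y).2) x, deriv (fun s => (X x s).2) y]

lemma jac_det_general (r q θ c : ℝ) (X : ℝ → ℝ → ℝ × ℝ)
    (hX : ∀ x y : ℝ, X x y =
      (-θ * y + c * θ * y *
          (1 / ((x - r) ^ 2 + y ^ 2) - 1 / ((x - q) ^ 2 + y ^ 2)),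
       θ * x - c * θ *
          ((x - r) / ((x - r) ^ 2 + y ^ 2) -
            (x - q) / ((x - q) ^ 2 + y ^ 2))))
    (x y A B : ℝ) (hA : (x - r) ^ 2 + y ^ 2 = A) (hB : (x - q) ^ 2 + y ^ 2 = B)
    (hA0 : A ≠ 0) (hB0 : B ≠ 0) :
    (jacobianMatrix X x y).det =
      θ ^ 2 * (1 - c ^ 2 * ((q - r) ^ 2 * (2 * A + 2 * B - (q - r) ^ 2) / (A * B) ^ 2)) := by
  have dx : ∀ p : ℝ, HasDerivAt (fun s : ℝ => (s - p) ^ 2 + y ^ 2) (2 * (x - p)) x := by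
    intro p
    have := (((hasDerivAt_id x).sub_const p).pow 2).add_const (y ^ 2)
    simpa using this
  have dy : ∀ p : ℝ, HasDerivAt (fun s : ℝ => (x - p) ^ 2 + s ^ 2) (2 * y) y := by
    intro p
    have := ((hasDerivAt_id y).pow 2).const_add ((x - p) ^ 2)
    simpa using this
  have hA1 : (x - r) ^ 2 + y ^ 2 ≠ 0 := by rwa [hA]
  have hB1 : (x - q) ^ 2 + y ^ 2 ≠ 0 := by rwa [hB]
  have e11 : HasDerivAt (fun s => (X s y).1)
      (c * θ * y * (-(2 * (x - r)) / A ^ 2 - -(2 * (x - q)) / B ^ 2)) x := by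
    simp only [hX]
    have := ((((hasDerivAt_const x (1 : ℝ)).fun_div (dx r) hA1).fun_sub
      ((hasDerivAt_const x (1 : ℝ)).fun_div (dx q) hB1)).const_mul (c * θ * y)).const_add (-θ * y)
    rw [hA, hB] at this
    refine this.congr_deriv ?_
    ring
  have e12 : HasDerivAt (fun s => (X x s).1)
      (-θ + (c * θ * (1 / A - 1 / B) + c * θ * y * (-(2 * y) / A ^ 2 - -(2 * y) / B ^ 2))) y := by
    simp only [hX]
    have := ((hasDerivAt_id' y).const_mul (-θ)).fun_add (((hasDerivAt_id' y).const_mul (c * θ)).fun_mul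
      (((hasDerivAt_const y (1 : ℝ)).fun_div (dy r) hA1).fun_sub
      ((hasDerivAt_const y (1 : ℝ)).fun_div (dy q) hB1)))
    rw [hA, hB] at this
    refine this.congr_deriv ?_
    ring
  have e21 : HasDerivAt (fun s => (X s y).2)
      (θ - c * θ * ((A - (x - r) * (2 * (x - r))) / A ^ 2
        - (B - (x - q) * (2 * (x - q))) / B ^ 2)) x := by
    simp only [hX]
    have := ((hasDerivAt_id' x).const_mul θ).fun_sub
      (((((hasDerivAt_id' x).sub_const r).fun_div (dx r) hA1).fun_sub
      (((hasDerivAt_id' x).sub_const q).fun_div (dx q) hB1)).const_mul (c * θ))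
    rw [hA, hB] at this
    refine this.congr_deriv ?_
    ring
  have e22 : HasDerivAt (fun s => (X x s).2)
      (- (c * θ * (-((x - r) * (2 * y)) / A ^ 2 - -((x - q) * (2 * y)) / B ^ 2))) y := by
    simp only [hX]
    have := ((((hasDerivAt_const y (x - r)).fun_div (dy r) hA1).fun_sub
      ((hasDerivAt_const y (x - q)).fun_div (dy q) hB1)).const_mul (c * θ)).const_sub (θ * x)
    rw [hA, hB] at this
    refine this.congr_deriv ?_
    ring
  rw [jacobianMatrix, Matrix.det_fin_two_of, e11.deriv, e12.deriv, e21.deriv, e22.deriv]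
  -- the entries of the matrix in terms of the real and imaginary parts of the complex derivative
  set P := ((y ^ 2 - (x - r) ^ 2) / A ^ 2 - (y ^ 2 - (x - q) ^ 2) / B ^ 2) with hP
  set S := (-(2 * (x - r) * y) / A ^ 2 - -(2 * (x - q) * y) / B ^ 2) with hS
  have h12 : -θ + (c * θ * (1 / A - 1 / B) + c * θ * y * (-(2 * y) / A ^ 2 - -(2 * y) / B ^ 2))
      = -θ - c * θ * P := by
    have h1 : 1 / A = ((x - r) ^ 2 + y ^ 2) / A ^ 2 := by rw [hA]; field_simp
    have h2 : 1 / B = ((x - q) ^ 2 + y ^ 2) / B ^ 2 := by rw [hB]; field_simp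
    rw [h1, h2, hP]; ring
  have h21 : (A - (x - r) * (2 * (x - r))) / A ^ 2 - (B - (x - q) * (2 * (x - q))) / B ^ 2 = P := by
    rw [hP, ← hA, ← hB]; ring
  have h11 : c * θ * y * (-(2 * (x - r)) / A ^ 2 - -(2 * (x - q)) / B ^ 2) = c * θ * S := by
    rw [hS]; ring
  have h22 : - (c * θ * (-((x - r) * (2 * y)) / A ^ 2 - -((x - q) * (2 * y)) / B ^ 2))
      = - (c * θ * S) := by
    rw [hS]; ring
  rw [h12, h21, h11, h22]
  have key : P ^ 2 + S ^ 2 = (q - r) ^ 2 * (2 * A + 2 * B - (q - r) ^ 2) / (A * B) ^ 2 := by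
    have hP' : P = ((y ^ 2 - (x - r) ^ 2) * B ^ 2 - (y ^ 2 - (x - q) ^ 2) * A ^ 2) / (A * B) ^ 2 := by
      rw [hP]; field_simp
    have hS' : S = (-(2 * (x - r) * y) * B ^ 2 + (2 * (x - q) * y) * A ^ 2) / (A * B) ^ 2 := by
      rw [hS]; field_simp; ring
    rw [hP', hS', div_pow, div_pow, ← add_div, div_eq_div_iff (by positivity) (by positivity)]
    rw [← hA, ← hB]; ring
  rw [← key]; ring

/-- for `φ₀ > 0` and `ρ₀ > max{(1−φ₀)/(1+φ₀), (φ₀−1)/(1+φ₀)}`, the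
determinant of the Jacobian of `X` at the boundary equilibria `(x_s*, ±y_s*)` equals
`(cR − R³ − (c + R²)r₀)(cR − R³ + (c + R²)r₀)θ₀²/(c²(R² − r₀²))`, and this value is
negative, so `(x_s*, ±y_s*)` are hyperbolic saddles. -/
theorem boundary_saddles_jacobian_det
    (R r₀ θ₀ Γ : ℝ)
    (hR : 0 < R) (hr₀ : 0 < r₀) (hrR : r₀ < R) (hθ : θ₀ ≠ 0) (hΓ : Γ ≠ 0)
    (c ρ₀ φ₀ : ℝ) (hc : c = Γ / (2 * Real.pi * θ₀))
    (hρ : ρ₀ = r₀ / R) (hφ : φ₀ = R ^ 2 / c) (hφpos : 0 < φ₀)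
    (hregion : max ((1 - φ₀) / (1 + φ₀)) ((φ₀ - 1) / (1 + φ₀)) < ρ₀)
    (X : ℝ → ℝ → ℝ × ℝ)
    (hX : ∀ x y : ℝ, X x y =
      (-θ₀ * y + c * θ₀ * y *
          (1 / ((x - r₀) ^ 2 + y ^ 2) - 1 / ((x - R ^ 2 / r₀) ^ 2 + y ^ 2)),
       θ₀ * x - c * θ₀ *
          ((x - r₀) / ((x - r₀) ^ 2 + y ^ 2) -
            (x - R ^ 2 / r₀) / ((x - R ^ 2 / r₀) ^ 2 + y ^ 2))))
    (xs ys : ℝ)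
    (hxs : xs = (R ^ 2 + r₀ ^ 2) / (2 * r₀) - (c / (2 * r₀)) * (1 - r₀ ^ 2 / R ^ 2))
    (hys_pos : 0 < ys)
    (hys : ys ^ 2 = (1 / 4) * (2 * (c ^ 2 + R ^ 4) / R ^ 2 - (c - R ^ 2) ^ 2 / r₀ ^ 2 -
      (c + R ^ 2) ^ 2 * r₀ ^ 2 / R ^ 4))
    (D : ℝ)
    (hD : D = (c * R - R ^ 3 - (c + R ^ 2) * r₀) * (c * R - R ^ 3 + (c + R ^ 2) * r₀) *
      θ₀ ^ 2 / (c ^ 2 * (R ^ 2 - r₀ ^ 2))) :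
    (jacobianMatrix X xs ys).det = D ∧ (jacobianMatrix X xs (-ys)).det = D ∧ D < 0 := by
  have hc0 : 0 < c := by
    by_contra h
    have : R ^ 2 / c ≤ 0 := div_nonpos_of_nonneg_of_nonpos (by positivity) (not_lt.mp h)
    linarith
  have hd : 0 < R ^ 2 - r₀ ^ 2 := by nlinarith
  have hcirc : xs ^ 2 + ys ^ 2 = R ^ 2 := by
    rw [hys, hxs]; field_simp; ring
  have hA : (xs - r₀) ^ 2 + ys ^ 2 = c * (R ^ 2 - r₀ ^ 2) / R ^ 2 := by
    have : (xs - r₀) ^ 2 + ys ^ 2 = R ^ 2 + r₀ ^ 2 - 2 * r₀ * xs := by rw [← hcirc]; ring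
    rw [this, hxs]; field_simp; ring
  have hB : (xs - R ^ 2 / r₀) ^ 2 + ys ^ 2 = c * (R ^ 2 - r₀ ^ 2) / r₀ ^ 2 := by
    have : (xs - R ^ 2 / r₀) ^ 2 + ys ^ 2 = R ^ 2 + (R ^ 2 / r₀) ^ 2 - 2 * (R ^ 2 / r₀) * xs := by
      linear_combination hcirc
    rw [this, hxs]; field_simp; ring
  have hfin : θ₀ ^ 2 * (1 - c ^ 2 * ((R ^ 2 / r₀ - r₀) ^ 2 *
      (2 * (c * (R ^ 2 - r₀ ^ 2) / R ^ 2) + 2 * (c * (R ^ 2 - r₀ ^ 2) / r₀ ^ 2)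
        - (R ^ 2 / r₀ - r₀) ^ 2) /
      (c * (R ^ 2 - r₀ ^ 2) / R ^ 2 * (c * (R ^ 2 - r₀ ^ 2) / r₀ ^ 2)) ^ 2)) = D := by
    have hq : R ^ 2 / r₀ - r₀ = (R ^ 2 - r₀ ^ 2) / r₀ := by field_simp
    have e : (c * R - R ^ 3 - (c + R ^ 2) * r₀) * (c * R - R ^ 3 + (c + R ^ 2) * r₀)
      = c ^ 2 * (R ^ 2 - r₀ ^ 2) - 2 * c * R ^ 2 * (R ^ 2 + r₀ ^ 2)
        + R ^ 4 * (R ^ 2 - r₀ ^ 2) := by ring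
    rw [hD, hq, e]
    generalize R ^ 2 - r₀ ^ 2 = d at hd
    field_simp
    ring
  have hA0 : c * (R ^ 2 - r₀ ^ 2) / R ^ 2 ≠ 0 := by positivity
  have hB0 : c * (R ^ 2 - r₀ ^ 2) / r₀ ^ 2 ≠ 0 := by positivity
  refine ⟨?_, ?_, ?_⟩
  · rw [jac_det_general r₀ (R ^ 2 / r₀) θ₀ c X hX xs ys _ _ hA hB hA0 hB0, hfin]
  · rw [jac_det_general r₀ (R ^ 2 / r₀) θ₀ c X hX xs (-ys) _ _
      (by rw [neg_sq]; exact hA) (by rw [neg_sq]; exact hB) hA0 hB0, hfin]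
  · obtain ⟨h1, h2⟩ := max_lt_iff.mp hregion
    have hp : 0 < 1 + φ₀ := by linarith
    have hφc : φ₀ * c = R ^ 2 := by rw [hφ]; field_simp
    have hρR : ρ₀ * R = r₀ := by rw [hρ]; field_simp
    rw [div_lt_iff₀ hp] at h1 h2
    have hcR : 0 < c * R := by positivity
    have g1 := mul_lt_mul_of_pos_right h1 hcR
    have g2 := mul_lt_mul_of_pos_right h2 hcR
    have t : ρ₀ * (1 + φ₀) * (c * R) = (c + R ^ 2) * r₀ := by
      rw [← hφc, ← hρR]; ring
    have t1 : (1 - φ₀) * (c * R) = c * R - R ^ 3 := by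
      linear_combination (-R) * hφc
    have t2 : (φ₀ - 1) * (c * R) = R ^ 3 - c * R := by
      linear_combination R * hφc
    rw [t, t1] at g1
    rw [t, t2] at g2
    rw [hD]
    apply div_neg_of_neg_of_pos _ (by positivity)
    apply mul_neg_of_neg_of_pos _ (by positivity)
    exact mul_neg_of_neg_of_pos (by linarith) (by linarith)
end

section
/- Let (x*, 0) with x* ∈ (−R, R), x* ≠ r₀, be a critical point of X, and set ν* = ((x*)² − R²)/((x* − r₀)(x* − R²/r₀)). Then the determinant of the Jacobian matrix of X at (x*, 0) equals −θ₀²·ν*·(2 + ν*). Moreover, if φ₀ > 0 and x* ∈ (−R, 0) then this determinant is positive (so (x*,0) is a linear center), and if φ₀ > 0 and x* ∈ (r₀, R) then this determinant is negative (so (x*,0) is a hyperbolic saddle). -/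
/-- at an on-axis critical point `(x*, 0)` the Jacobian determinant equals
`−θ₀²·ν*·(2 + ν*)` with `ν* = ((x*)² − R²)/((x* − r₀)(x* − R²/r₀))`; moreover for
`φ₀ > 0` it is positive when `x* ∈ (−R, 0)` (linear center) and negative when
`x* ∈ (r₀, R)` (hyperbolic saddle). -/
theorem on_axis_jacobian_det
    (R r₀ θ₀ Γ : ℝ)
    (hR : 0 < R) (hr₀ : 0 < r₀) (hrR : r₀ < R) (hθ : θ₀ ≠ 0) (hΓ : Γ ≠ 0)
    (c φ₀ : ℝ) (hc : c = Γ / (2 * Real.pi * θ₀)) (hφ : φ₀ = R ^ 2 / c)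
    (X : ℝ → ℝ → ℝ × ℝ)
    (hX : ∀ x y : ℝ, X x y =
      (-θ₀ * y + c * θ₀ * y *
          (1 / ((x - r₀) ^ 2 + y ^ 2) - 1 / ((x - R ^ 2 / r₀) ^ 2 + y ^ 2)),
       θ₀ * x - c * θ₀ *
          ((x - r₀) / ((x - r₀) ^ 2 + y ^ 2) -
            (x - R ^ 2 / r₀) / ((x - R ^ 2 / r₀) ^ 2 + y ^ 2))))
    (x : ℝ) (hx₁ : -R < x) (hx₂ : x < R) (hx₃ : x ≠ r₀)
    (hcrit : X x 0 = (0, 0))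
    (ν : ℝ) (hν : ν = (x ^ 2 - R ^ 2) / ((x - r₀) * (x - R ^ 2 / r₀))) :
    (jacobianMatrix X x 0).det = -θ₀ ^ 2 * ν * (2 + ν) ∧
    (0 < φ₀ → x < 0 → 0 < (jacobianMatrix X x 0).det) ∧
    (0 < φ₀ → r₀ < x → (jacobianMatrix X x 0).det < 0) := by
  have hS : R < R ^ 2 / r₀ := by
    rw [lt_div_iff₀ hr₀]; nlinarith
  have hRS : R ^ 2 = r₀ * (R ^ 2 / r₀) := by field_simp
  generalize hs : R ^ 2 / r₀ = s at *
  have ha : x - r₀ ≠ 0 := sub_ne_zero.mpr hx₃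
  have hb0 : x - s < 0 := by linarith
  have hb : x - s ≠ 0 := hb0.ne
  have hx : θ₀ * x - c * θ₀ * ((x - r₀) / ((x - r₀) ^ 2 + 0 ^ 2) -
      (x - s) / ((x - s) ^ 2 + 0 ^ 2)) = 0 := by
    have h := congrArg Prod.snd hcrit
    rw [hX] at h
    exact h
  have hxc : x * ((x - r₀) * (x - s)) = c * (r₀ - s) := by
    field_simp at hx
    simp only [zero_pow two_ne_zero, add_zero] at hx
    field_simp at hx
    apply mul_left_cancel₀ hθ
    linear_combination hx
  have hk : c * (1 / (x - r₀) ^ 2 - 1 / (x - s) ^ 2) = 1 + ν := by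
    rw [hν]
    field_simp
    have e : R ^ 2 = r₀ * s := hRS
    rw [e]
    linear_combination (-(2 * x - r₀ - s)) * hxc
  have d11 : deriv (fun t => (X t 0).1) x = 0 := by
    have : (fun t => (X t 0).1) = fun _ => (0 : ℝ) := by
      funext t; rw [hX]; simp
    rw [this]; simp
  have hA : HasDerivAt (fun t : ℝ => (x - r₀) ^ 2 + t ^ 2) 0 0 := by
    simpa using ((hasDerivAt_id (0 : ℝ)).pow 2).const_add ((x - r₀) ^ 2)
  have hB : HasDerivAt (fun t : ℝ => (x - s) ^ 2 + t ^ 2) 0 0 := by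
    simpa using ((hasDerivAt_id (0 : ℝ)).pow 2).const_add ((x - s) ^ 2)
  have hA0 : (x - r₀) ^ 2 + (0 : ℝ) ^ 2 ≠ 0 := by simpa using ha
  have hB0 : (x - s) ^ 2 + (0 : ℝ) ^ 2 ≠ 0 := by simpa using hb
  have d12 : deriv (fun t => (X x t).1) 0 = θ₀ * ν := by
    have h1 := ((hasDerivAt_const (0 : ℝ) (1 : ℝ)).fun_div hA hA0).fun_sub
      ((hasDerivAt_const (0 : ℝ) (1 : ℝ)).fun_div hB hB0)
    have h2 := ((hasDerivAt_id' (0 : ℝ)).const_mul (-θ₀)).fun_add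
      (((hasDerivAt_id' (0 : ℝ)).const_mul (c * θ₀)).fun_mul h1)
    simp only [hX]
    rw [h2.deriv]
    simp only [ne_eq, OfNat.ofNat_ne_zero, not_false_eq_true, zero_pow, add_zero]
    linear_combination θ₀ * hk
  have d22 : deriv (fun t => (X x t).2) 0 = 0 := by
    have h1 := ((hasDerivAt_const (0 : ℝ) (x - r₀)).fun_div hA hA0).fun_sub
      ((hasDerivAt_const (0 : ℝ) (x - s)).fun_div hB hB0)
    have h2 := (h1.const_mul (c * θ₀)).const_sub (θ₀ * x)
    simp only [hX]
    rw [h2.deriv]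
    simp
  have key : ∀ p : ℝ, x - p ≠ 0 →
      HasDerivAt (fun t : ℝ => (t - p) / ((t - p) ^ 2 + 0 ^ 2)) (-(1 / (x - p) ^ 2)) x := by
    intro p hp
    have h0 := (hasDerivAt_id' x).sub_const p
    have h := h0.fun_div ((h0.fun_pow 2).add_const ((0 : ℝ) ^ 2)) (by simpa using hp)
    refine h.congr_deriv ?_
    simp only [ne_eq, OfNat.ofNat_ne_zero, not_false_eq_true, zero_pow, add_zero]
    field_simp
    norm_num
    ring
  have d21 : deriv (fun t => (X t 0).2) x = θ₀ * (2 + ν) := by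
    have h2 := ((hasDerivAt_id' x).const_mul θ₀).fun_sub
      (((key r₀ ha).fun_sub (key s hb)).const_mul (c * θ₀))
    simp only [hX]
    rw [h2.deriv]
    linear_combination θ₀ * hk
  have hdet : (jacobianMatrix X x 0).det = -θ₀ ^ 2 * ν * (2 + ν) := by
    rw [jacobianMatrix, Matrix.det_fin_two_of, d11, d12, d21, d22]
    ring
  have hθ2 : 0 < θ₀ ^ 2 := by positivity
  have hnum : x ^ 2 - R ^ 2 < 0 := by nlinarith
  refine ⟨hdet, ?_, ?_⟩
  · intro _ hx0
    have hab : 0 < (x - r₀) * (x - s) := mul_pos_of_neg_of_neg (by linarith) hb0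
    have hν0 : ν < 0 := by rw [hν]; exact div_neg_of_neg_of_pos hnum hab
    have hν2 : 0 < 2 + ν := by
      have : -2 < ν := by
        rw [hν, lt_div_iff₀ hab]
        nlinarith [mul_pos (neg_pos.mpr hx0) hr₀, mul_pos (neg_pos.mpr hx0) (hR.trans hS)]
      linarith
    rw [hdet]
    have := mul_pos (mul_pos hθ2 (neg_pos.mpr hν0)) hν2
    linarith
  · intro _ hx0
    have hab : (x - r₀) * (x - s) < 0 := mul_neg_of_pos_of_neg (by linarith) hb0
    have hν0 : 0 < ν := by rw [hν]; exact div_pos_of_neg_of_neg hnum hab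
    rw [hdet]
    have := mul_pos (mul_pos hθ2 hν0) (by linarith : 0 < 2 + ν)
    linarith
end

section
/- Assume φ₀ < 0 and let (x*, 0) with x* ∈ (0, r₀) be a critical point of X. Then 1 + c·(1/a(x*)² − 1/b(x*)²) = (3r₀(x*)² − 2(R² + r₀²)x* + R²r₀)/((r₀ − x*)(R² − r₀x*)); this quantity is positive if x* ∈ (0, x_M) and negative if x* ∈ (x_M, r₀), where x_M = (R² + r₀² − √(R⁴ − R²r₀² + r₀⁴))/(3r₀). Consequently, the determinant of the Jacobian matrix of X at (x*, 0) is positive if x* ∈ (0, x_M) (linear center) and negative if x* ∈ (x_M, r₀) (hyperbolic saddle). -/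
/-- for `φ₀ < 0` and an on-axis critical point `(x*, 0)` with
`x* ∈ (0, r₀)`, one has
`1 + c(1/a(x*)² − 1/b(x*)²) = (3r₀(x*)² − 2(R² + r₀²)x* + R²r₀)/((r₀ − x*)(R² − r₀x*))`,
which is positive for `x* ∈ (0, x_M)` and negative for `x* ∈ (x_M, r₀)`; accordingly
the Jacobian determinant is positive (linear center) resp. negative (hyperbolic saddle). -/
theorem on_axis_stability_phi_neg
    (R r₀ θ₀ Γ : ℝ)
    (hR : 0 < R) (hr₀ : 0 < r₀) (hrR : r₀ < R) (hθ : θ₀ ≠ 0) (hΓ : Γ ≠ 0)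
    (c φ₀ : ℝ) (hc : c = Γ / (2 * Real.pi * θ₀)) (hφ : φ₀ = R ^ 2 / c) (hφneg : φ₀ < 0)
    (X : ℝ → ℝ → ℝ × ℝ)
    (hX : ∀ x y : ℝ, X x y =
      (-θ₀ * y + c * θ₀ * y *
          (1 / ((x - r₀) ^ 2 + y ^ 2) - 1 / ((x - R ^ 2 / r₀) ^ 2 + y ^ 2)),
       θ₀ * x - c * θ₀ *
          ((x - r₀) / ((x - r₀) ^ 2 + y ^ 2) -
            (x - R ^ 2 / r₀) / ((x - R ^ 2 / r₀) ^ 2 + y ^ 2))))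
    (x : ℝ) (hx₁ : 0 < x) (hx₂ : x < r₀)
    (hcrit : X x 0 = (0, 0))
    (xM : ℝ)
    (hxM : xM = (R ^ 2 + r₀ ^ 2 - Real.sqrt (R ^ 4 - R ^ 2 * r₀ ^ 2 + r₀ ^ 4)) / (3 * r₀)) :
    1 + c * (1 / (x - r₀) ^ 2 - 1 / (x - R ^ 2 / r₀) ^ 2) =
        (3 * r₀ * x ^ 2 - 2 * (R ^ 2 + r₀ ^ 2) * x + R ^ 2 * r₀) /
          ((r₀ - x) * (R ^ 2 - r₀ * x)) ∧
    (x < xM → 0 < (3 * r₀ * x ^ 2 - 2 * (R ^ 2 + r₀ ^ 2) * x + R ^ 2 * r₀) /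
          ((r₀ - x) * (R ^ 2 - r₀ * x))) ∧
    (xM < x → (3 * r₀ * x ^ 2 - 2 * (R ^ 2 + r₀ ^ 2) * x + R ^ 2 * r₀) /
          ((r₀ - x) * (R ^ 2 - r₀ * x)) < 0) ∧
    (x < xM → 0 < (jacobianMatrix X x 0).det) ∧
    (xM < x → (jacobianMatrix X x 0).det < 0) := by
  have hcneg : c < 0 := by
    by_contra h
    have : 0 ≤ R ^ 2 / c := div_nonneg (by positivity) (not_lt.mp h)
    linarith
  obtain ⟨B, hB⟩ : ∃ B, B = R ^ 2 / r₀ := ⟨_, rfl⟩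
  have hBr : R ^ 2 = B * r₀ := by rw [hB]; field_simp
  have hrB : r₀ < B := by
    rw [hB, lt_div_iff₀ hr₀]; nlinarith
  have hu : x - r₀ < 0 := by linarith
  have hv : x - B < 0 := by linarith
  have hu0 := hu.ne
  have hv0 := hv.ne
  have hden : 0 < (r₀ - x) * (R ^ 2 - r₀ * x) := by
    apply mul_pos (by linarith)
    rw [hBr]; nlinarith
  simp only [← hB] at hX ⊢
  have hcr : x = c * (1 / (x - r₀) - 1 / (x - B)) := by
    have h2 : (X x 0).2 = 0 := by rw [hcrit]
    rw [hX] at h2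
    have e1 : (x - r₀) / ((x - r₀) ^ 2 + 0 ^ 2) = 1 / (x - r₀) := by field_simp; simp
    have e2 : (x - B) / ((x - B) ^ 2 + 0 ^ 2) = 1 / (x - B) := by field_simp; simp
    simp only [e1, e2] at h2
    have h3 : θ₀ * (x - c * (1 / (x - r₀) - 1 / (x - B))) = 0 := by linarith
    have := (mul_eq_zero.mp h3).resolve_left hθ
    linarith
  have hQ : 1 + c * (1 / (x - r₀) ^ 2 - 1 / (x - B) ^ 2) =
        (3 * r₀ * x ^ 2 - 2 * (R ^ 2 + r₀ ^ 2) * x + R ^ 2 * r₀) /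
          ((r₀ - x) * (R ^ 2 - r₀ * x)) := by
    have e : 1 + c * (1 / (x - r₀) ^ 2 - 1 / (x - B) ^ 2) =
        1 + x * (1 / (x - r₀) + 1 / (x - B)) := by
      have : c * (1 / (x - r₀) ^ 2 - 1 / (x - B) ^ 2) =
        (c * (1 / (x - r₀) - 1 / (x - B))) * (1 / (x - r₀) + 1 / (x - B)) := by
        rw [← one_div_pow, ← one_div_pow]; ring
      rw [this, ← hcr]
    rw [e, eq_div_iff hden.ne', hBr]
    field_simp
    ring
  have hsq : (Real.sqrt (R ^ 4 - R ^ 2 * r₀ ^ 2 + r₀ ^ 4)) ^ 2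
      = R ^ 4 - R ^ 2 * r₀ ^ 2 + r₀ ^ 4 :=
    Real.sq_sqrt (by nlinarith [sq_nonneg (R ^ 2 - r₀ ^ 2), sq_nonneg (R * r₀)])
  have hs0 := Real.sqrt_nonneg (R ^ 4 - R ^ 2 * r₀ ^ 2 + r₀ ^ 4)
  have hfac0 : R ^ 2 + r₀ ^ 2 - Real.sqrt (R ^ 4 - R ^ 2 * r₀ ^ 2 + r₀ ^ 4) = xM * (3 * r₀) := by
    rw [hxM]; field_simp
  generalize Real.sqrt (R ^ 4 - R ^ 2 * r₀ ^ 2 + r₀ ^ 4) = S at *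
  have hSgt : 2 * r₀ ^ 2 - R ^ 2 < S := by
    have : 0 < r₀ ^ 2 * (R ^ 2 - r₀ ^ 2) := mul_pos (by positivity) (by nlinarith)
    apply lt_of_pow_lt_pow_left₀ 2 hs0
    nlinarith
  have hP : 0 < R ^ 2 + r₀ ^ 2 + S - 3 * r₀ * x := by nlinarith
  have hfac : 3 * r₀ * (3 * r₀ * x ^ 2 - 2 * (R ^ 2 + r₀ ^ 2) * x + R ^ 2 * r₀) =
      3 * r₀ * ((xM - x) * (R ^ 2 + r₀ ^ 2 + S - 3 * r₀ * x)) := by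
    have : 3 * r₀ * ((xM - x) * (R ^ 2 + r₀ ^ 2 + S - 3 * r₀ * x))
      = (xM * (3 * r₀) - 3 * r₀ * x) * (R ^ 2 + r₀ ^ 2 + S - 3 * r₀ * x) := by ring
    rw [this, ← hfac0]
    linear_combination hsq
  have hfac' := mul_left_cancel₀ (by positivity) hfac
  have hpos : x < xM → 0 < (3 * r₀ * x ^ 2 - 2 * (R ^ 2 + r₀ ^ 2) * x + R ^ 2 * r₀) /
          ((r₀ - x) * (R ^ 2 - r₀ * x)) := fun h => by
    rw [hfac']; exact div_pos (mul_pos (by linarith) hP) hden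
  have hneg : xM < x → (3 * r₀ * x ^ 2 - 2 * (R ^ 2 + r₀ ^ 2) * x + R ^ 2 * r₀) /
          ((r₀ - x) * (R ^ 2 - r₀ * x)) < 0 := fun h => by
    rw [hfac']; exact div_neg_of_neg_of_pos (mul_neg_of_neg_of_pos (by linarith) hP) hden
  have hW : 0 < 1 / (x - r₀) ^ 2 - 1 / (x - B) ^ 2 := by
    have : 1 / (x - B) ^ 2 < 1 / (x - r₀) ^ 2 :=
      one_div_lt_one_div_of_lt (by positivity) (by nlinarith)
    linarith
  have hdet : (jacobianMatrix X x 0).det =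
      θ₀ ^ 2 * (1 - c * (1 / (x - r₀) ^ 2 - 1 / (x - B) ^ 2)) *
        (1 + c * (1 / (x - r₀) ^ 2 - 1 / (x - B) ^ 2)) := by
    have d1 : deriv (fun s => (X s 0).1) x = 0 := by
      have : (fun s => (X s 0).1) = fun _ => (0 : ℝ) := by
        funext s; rw [hX]; simp
      rw [this]; simp
    have d2 : deriv (fun s => (X x s).1) 0 =
        -θ₀ * (1 - c * (1 / (x - r₀) ^ 2 - 1 / (x - B) ^ 2)) := by
      have e : (fun s => (X x s).1) = fun y => y * (-θ₀ + c * θ₀ *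
          (1 / ((x - r₀) ^ 2 + y ^ 2) - 1 / ((x - B) ^ 2 + y ^ 2))) := by
        funext y; rw [hX]; ring
      have hd : DifferentiableAt ℝ (fun y : ℝ => -θ₀ + c * θ₀ *
          (1 / ((x - r₀) ^ 2 + y ^ 2) - 1 / ((x - B) ^ 2 + y ^ 2))) 0 := by
        have h1 : (x - r₀) ^ 2 + (0 : ℝ) ^ 2 ≠ 0 := by positivity
        have h2 : (x - B) ^ 2 + (0 : ℝ) ^ 2 ≠ 0 := by positivity
        fun_prop (disch := assumption)
      have := ((hasDerivAt_id (0 : ℝ)).mul hd.hasDerivAt).deriv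
      rw [e]
      refine Eq.trans this ?_
      simp
      ring
    have d3 : deriv (fun s => (X s 0).2) x =
        θ₀ * (1 + c * (1 / (x - r₀) ^ 2 - 1 / (x - B) ^ 2)) := by
      have e : (fun s => (X s 0).2) = fun s => θ₀ * s - c * θ₀ *
          ((s - r₀)⁻¹ - (s - B)⁻¹) := by
        have k : ∀ t : ℝ, t / (t ^ 2 + 0 ^ 2) = t⁻¹ := by
          intro t
          by_cases ht : t = 0
          · simp [ht]
          · field_simp; simp
        funext s; rw [hX]; simp only [k]
      have h1 := ((hasDerivAt_id x).sub_const r₀).fun_inv hu0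
      have h2 := ((hasDerivAt_id x).sub_const B).fun_inv hv0
      have h3 := ((hasDerivAt_id x).const_mul θ₀).sub ((h1.sub h2).const_mul (c * θ₀))
      rw [e]
      refine Eq.trans h3.deriv ?_
      simp only [id]
      ring
    rw [jacobianMatrix, Matrix.det_fin_two_of, d1, d2, d3]
    ring
  have hfp : 0 < θ₀ ^ 2 * (1 - c * (1 / (x - r₀) ^ 2 - 1 / (x - B) ^ 2)) := by
    have := mul_neg_of_neg_of_pos hcneg hW
    exact mul_pos (by positivity) (by linarith)
  refine ⟨hQ, hpos, hneg, fun h => ?_, fun h => ?_⟩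
  · rw [hdet, hQ]; exact mul_pos hfp (hpos h)
  · rw [hdet, hQ]; exact mul_neg_of_pos_of_neg hfp (hneg h)
end

section
/- Assume φ₀ > 0 and set λ = c·(r₀ − R²/r₀) and P(x) = x·(x − r₀)·(x − R²/r₀). Then: P(R) − λ > 0 if and only if ρ₀ > (φ₀ − 1)/(1 + φ₀); P(R) − λ = 0 if and only if ρ₀ = (φ₀ − 1)/(1 + φ₀); P(−R) − λ > 0 if and only if ρ₀ < (1 − φ₀)/(1 + φ₀); and P(−R) − λ = 0 if and only if ρ₀ = (1 − φ₀)/(1 + φ₀). -/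
/-- for `φ₀ > 0`, the signs of `P(±R) − λ` are determined by the position
of `ρ₀` relative to `(φ₀ − 1)/(1 + φ₀)` and `(1 − φ₀)/(1 + φ₀)`. -/
theorem sign_of_P_at_boundary
    (R r₀ θ₀ Γ : ℝ)
    (hR : 0 < R) (hr₀ : 0 < r₀) (hrR : r₀ < R) (hθ : θ₀ ≠ 0) (hΓ : Γ ≠ 0)
    (c ρ₀ φ₀ : ℝ) (hc : c = Γ / (2 * Real.pi * θ₀))
    (hρ : ρ₀ = r₀ / R) (hφ : φ₀ = R ^ 2 / c) (hφpos : 0 < φ₀)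
    (lam : ℝ) (hlam : lam = c * (r₀ - R ^ 2 / r₀))
    (P : ℝ → ℝ) (hP : ∀ x : ℝ, P x = x * (x - r₀) * (x - R ^ 2 / r₀)) :
    (0 < P R - lam ↔ (φ₀ - 1) / (1 + φ₀) < ρ₀) ∧
    (P R - lam = 0 ↔ ρ₀ = (φ₀ - 1) / (1 + φ₀)) ∧
    (0 < P (-R) - lam ↔ ρ₀ < (1 - φ₀) / (1 + φ₀)) ∧
    (P (-R) - lam = 0 ↔ ρ₀ = (1 - φ₀) / (1 + φ₀)) := by
  have hc0 : c ≠ 0 := by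
    rintro rfl
    simp at hφ
    linarith
  have hρ0 : 0 < ρ₀ := by rw [hρ]; positivity
  have hρ1 : ρ₀ < 1 := by rw [hρ, div_lt_one hR]; exact hrR
  have hr : r₀ = ρ₀ * R := by rw [hρ]; field_simp
  have hcc : c = R ^ 2 / φ₀ := by rw [hφ]; field_simp
  have h1 : 0 < 1 + φ₀ := by linarith
  have hs : 0 < 1 - ρ₀ := by linarith
  have e1 : P R - lam =
      (R ^ 3 * (1 - ρ₀) / (φ₀ * ρ₀) * (1 + φ₀)) * (ρ₀ - (φ₀ - 1) / (1 + φ₀)) := by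
    rw [hP, hlam, hcc, hr]
    field_simp
    ring
  have e2 : P (-R) - lam =
      (R ^ 3 * (1 + ρ₀) / (φ₀ * ρ₀) * (1 + φ₀)) * ((1 - φ₀) / (1 + φ₀) - ρ₀) := by
    rw [hP, hlam, hcc, hr]
    field_simp
    ring
  have k1 : 0 < R ^ 3 * (1 - ρ₀) / (φ₀ * ρ₀) * (1 + φ₀) := by positivity
  have k2 : 0 < R ^ 3 * (1 + ρ₀) / (φ₀ * ρ₀) * (1 + φ₀) := by positivity
  rw [e1, e2]
  refine ⟨?_, ?_, ?_, ?_⟩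
  · rw [mul_pos_iff_of_pos_left k1, sub_pos]
  · rw [mul_eq_zero, or_iff_right k1.ne', sub_eq_zero]
  · rw [mul_pos_iff_of_pos_left k2, sub_pos]
  · rw [mul_eq_zero, or_iff_right k2.ne', sub_eq_zero, eq_comm]
end

section
/- Assume φ₀ < 0 and set λ = c·(r₀ − R²/r₀) > 0, P(x) = x·(x − r₀)·(x − R²/r₀), and x_M = (R² + r₀² − √(R⁴ − R²r₀² + r₀⁴))/(3r₀). Then f(ρ₀, φ₀) > 0 if and only if λ < P(x_M), and f(ρ₀, φ₀) = 0 if and only if λ = P(x_M). Moreover: if f(ρ₀, φ₀) < 0 then the equation P(x) = λ has no solution in [−R, R]; if f(ρ₀, φ₀) = 0 then x_M is its unique solution in [−R, R]; and if f(ρ₀, φ₀) > 0 then it has exactly two solutions in [−R, R], both lying in (0, r₀), one in (0, x_M) and one in (x_M, r₀). -/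
set_option maxHeartbeats 4000000 in
/-- for `φ₀ < 0` the sign of `f(ρ₀, φ₀)` decides the relative position of
`λ = c(r₀ − R²/r₀) > 0` and the local maximum value `P(x_M)`, and hence the number of
solutions of `P(x) = λ` in `[−R, R]`. -/
theorem saddle_node_root_count
    (R r₀ θ₀ Γ : ℝ)
    (hR : 0 < R) (hr₀ : 0 < r₀) (hrR : r₀ < R) (hθ : θ₀ ≠ 0) (hΓ : Γ ≠ 0)
    (c ρ₀ φ₀ : ℝ) (hc : c = Γ / (2 * Real.pi * θ₀))
    (hρ : ρ₀ = r₀ / R) (hφ : φ₀ = R ^ 2 / c) (hφneg : φ₀ < 0)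
    (fval : ℝ)
    (hf : fval = 27 * ρ₀ ^ 2 * (ρ₀ ^ 2 - 1) +
      φ₀ * (2 - 3 * ρ₀ ^ 2 - 3 * ρ₀ ^ 4 + 2 * ρ₀ ^ 6 -
        2 * (1 - ρ₀ ^ 2 + ρ₀ ^ 4) ^ ((3 : ℝ) / 2)))
    (lam : ℝ) (hlam : lam = c * (r₀ - R ^ 2 / r₀))
    (P : ℝ → ℝ) (hP : ∀ x : ℝ, P x = x * (x - r₀) * (x - R ^ 2 / r₀))
    (xM : ℝ)
    (hxM : xM = (R ^ 2 + r₀ ^ 2 - Real.sqrt (R ^ 4 - R ^ 2 * r₀ ^ 2 + r₀ ^ 4)) / (3 * r₀)) :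
    0 < lam ∧
    (0 < fval ↔ lam < P xM) ∧
    (fval = 0 ↔ lam = P xM) ∧
    (fval < 0 → ∀ x ∈ Set.Icc (-R) R, P x ≠ lam) ∧
    (fval = 0 → ∀ x ∈ Set.Icc (-R) R, (P x = lam ↔ x = xM)) ∧
    (0 < fval → ∃ x₁ x₂ : ℝ, 0 < x₁ ∧ x₁ < xM ∧ xM < x₂ ∧ x₂ < r₀ ∧
      P x₁ = lam ∧ P x₂ = lam ∧
      ∀ x ∈ Set.Icc (-R) R, P x = lam → x = x₁ ∨ x = x₂) := by
  obtain ⟨B, hB⟩ : ∃ B, B = R ^ 2 / r₀ := ⟨_, rfl⟩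
  have hBR : r₀ * B = R ^ 2 := by rw [hB]; field_simp
  obtain ⟨S, hS⟩ : ∃ S, S = Real.sqrt (R ^ 4 - R ^ 2 * r₀ ^ 2 + r₀ ^ 4) := ⟨_, rfl⟩
  have hpos : 0 < R ^ 4 - R ^ 2 * r₀ ^ 2 + r₀ ^ 4 := by
    have : 0 < R ^ 4 := by positivity
    nlinarith [sq_nonneg (R ^ 2 - 2 * r₀ ^ 2), sq_nonneg (R ^ 2 - r₀ ^ 2 / 2), pow_pos hr₀ 4]
  have hSpos : 0 < S := by rw [hS]; exact Real.sqrt_pos.mpr hpos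
  have hS2 : S ^ 2 = R ^ 4 - R ^ 2 * r₀ ^ 2 + r₀ ^ 4 := by rw [hS]; exact Real.sq_sqrt hpos.le
  have hcneg : c < 0 := by
    by_contra h
    have : 0 ≤ R ^ 2 / c := div_nonneg (by positivity) (not_lt.mp h)
    linarith
  -- the normalised root
  obtain ⟨s, hs⟩ : ∃ s, s = S / r₀ := ⟨_, rfl⟩
  have hspos : 0 < s := by rw [hs]; positivity
  have hSs : S = s * r₀ := by rw [hs]; field_simp
  have hs2 : s ^ 2 = r₀ ^ 2 - r₀ * B + B ^ 2 := by
    rw [hs, hB, div_pow, hS2]; field_simp; ring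
  have hxM' : 3 * xM = r₀ + B - s := by
    rw [hxM, ← hS, hs, hB]; field_simp
    ring
  have hRB : R < B := by
    by_contra h
    nlinarith
  have hsR : R < s := by
    refine lt_of_pow_lt_pow_left₀ 2 hspos.le ?_
    nlinarith [sq_pos_of_pos (sub_pos.mpr (hrR.trans hRB))]
  have ha : 2 * R < r₀ + B := by
    refine lt_of_pow_lt_pow_left₀ 2 (by linarith) ?_
    nlinarith [sq_pos_of_pos (sub_pos.mpr (hrR.trans hRB))]
  have hxM0 : 0 < xM := by
    have : s < r₀ + B := by
      refine lt_of_pow_lt_pow_left₀ 2 (by linarith) ?_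
      nlinarith
    linarith
  have hxMr : xM < r₀ := by
    have : B - 2 * r₀ < s := by
      refine lt_of_pow_lt_pow_left₀ 2 hspos.le ?_
      nlinarith [mul_pos hr₀ (sub_pos.mpr (hrR.trans hRB))]
    linarith
  have hRv : 3 * (R - xM) < 2 * s := by linarith
  have hPe : ∀ x, P x = x * (x - r₀) * (x - B) := fun x => by rw [hP, hB]
  have hBe : B = 3 * xM + s - r₀ := by linarith
  have hfac : ∀ x, P x - P xM = (x - xM) ^ 2 * (x - xM - s) := by
    intro x
    rw [hPe, hPe]
    have hq : 3 * xM ^ 2 + 2 * s * xM = r₀ * B := by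
      have : s = r₀ + B - 3 * xM := by linarith
      rw [this] at hs2 ⊢
      nlinarith
    have : r₀ = 3 * xM + s - B := by linarith
    linear_combination (xM - x) * hq + (x ^ 2 - xM ^ 2) * hxM'
  have hlampos : 0 < lam := by
    rw [hlam, ← hB]
    exact mul_pos_of_neg_of_neg hcneg (by linarith)
  have hrpow : (1 - ρ₀ ^ 2 + ρ₀ ^ 4) ^ ((3 : ℝ) / 2) = (S / R ^ 2) ^ 3 := by
    have h1 : 1 - ρ₀ ^ 2 + ρ₀ ^ 4 = (S / R ^ 2) ^ 2 := by
      rw [div_pow, hS2, hρ]; field_simp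
    have h0 : 0 ≤ S / R ^ 2 := by positivity
    rw [h1]
    generalize S / R ^ 2 = q at h0
    rw [← Real.rpow_natCast, ← Real.rpow_mul h0, ← Real.rpow_natCast]
    norm_num
  have hPM : 27 * r₀ ^ 3 * P xM = -2 * (r₀ ^ 2 + R ^ 2) ^ 3 + 9 * (r₀ ^ 2 + R ^ 2) * R ^ 2 * r₀ ^ 2
      + 2 * S ^ 3 := by
    have h3 : xM = (r₀ + B - s) / 3 := by linarith
    rw [hPe, hSs, ← hBR, h3]
    linear_combination (-3 * r₀ ^ 3 * s) * hs2
  have hc0 : c ≠ 0 := hcneg.ne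
  have hkey : R ^ 4 * c * fval = 27 * r₀ ^ 3 * (lam - P xM) := by
    rw [mul_sub, hPM, hf, hrpow, hlam, hφ, hρ]
    field_simp
    ring
  have hk1 : R ^ 4 * c < 0 := mul_neg_of_pos_of_neg (by positivity) hcneg
  have hk2 : 0 < 27 * r₀ ^ 3 := by positivity
  have hpos_iff : 0 < fval ↔ lam < P xM := by
    constructor
    · intro h
      by_contra h'
      nlinarith [mul_neg_of_neg_of_pos hk1 h, mul_nonneg hk2.le (sub_nonneg.mpr (not_lt.mp h'))]
    · intro h
      by_contra h'
      nlinarith [mul_nonneg_of_nonpos_of_nonpos hk1.le (not_lt.mp h'), mul_pos hk2 (sub_pos.mpr h)]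
  have hzero_iff : fval = 0 ↔ lam = P xM := by
    constructor
    · intro h
      rw [h, mul_zero] at hkey
      rcases mul_eq_zero.mp hkey.symm with h' | h' <;> linarith
    · intro h
      rw [h, sub_self, mul_zero] at hkey
      rcases mul_eq_zero.mp hkey with h' | h' <;> linarith
  have hle : ∀ x ∈ Set.Icc (-R) R, P x ≤ P xM := by
    intro x hx
    have := hfac x
    have h2 := hx.2
    have : (x - xM) ^ 2 * (x - xM - s) ≤ 0 :=
      mul_nonpos_of_nonneg_of_nonpos (sq_nonneg _) (by linarith)
    linarith
  have hdiff : ∀ x y, P y - P x = (y - x) * ((x - xM) ^ 2 + (x - xM) * (y - xM) + (y - xM) ^ 2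
      - s * ((x - xM) + (y - xM))) := by
    intro x y
    linear_combination hfac y - hfac x
  have hinc : ∀ x y, x < y → y ≤ xM → P x < P y := by
    intro x y hxy hy
    have h := hdiff x y
    have : 0 < (y - x) * ((x - xM) ^ 2 + (x - xM) * (y - xM) + (y - xM) ^ 2
      - s * ((x - xM) + (y - xM))) := by
      refine mul_pos (by linarith) ?_
      have h1 : 0 ≤ (x - xM) * (y - xM) :=
        mul_nonneg_of_nonpos_of_nonpos (by linarith) (by linarith)
      have h2 : 0 < s * (-((x - xM) + (y - xM))) := mul_pos hspos (by linarith)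
      nlinarith [sq_nonneg (x - xM), sq_nonneg (y - xM)]
    linarith
  have hdec : ∀ x y, xM ≤ x → x < y → y ≤ R → P y < P x := by
    intro x y hx hxy hy
    have h := hdiff x y
    have : (y - x) * ((x - xM) ^ 2 + (x - xM) * (y - xM) + (y - xM) ^ 2
      - s * ((x - xM) + (y - xM))) < 0 := by
      refine mul_neg_of_pos_of_neg (by linarith) ?_
      obtain ⟨u, hu⟩ : ∃ u, u = x - xM := ⟨_, rfl⟩
      obtain ⟨v, hv⟩ : ∃ v, v = y - xM := ⟨_, rfl⟩
      rw [← hu, ← hv]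
      have hu0 : 0 ≤ u := by linarith
      have huv : u < v := by linarith
      have hvs : 3 * v < 2 * s := by linarith
      nlinarith [mul_pos (sub_pos.mpr hvs) (show 0 < u + v by linarith),
        mul_nonneg hu0 (sub_pos.mpr huv).le, mul_pos (sub_pos.mpr huv) (show 0 < u + v by linarith)]
    linarith
  have hcont : Continuous P := by
    rw [show P = fun x => x * (x - r₀) * (x - B) from funext hPe]
    fun_prop
  refine ⟨hlampos, hpos_iff, hzero_iff, ?_, ?_, ?_⟩
  · intro h x hx hxe
    have h1 : ¬ 0 < fval := by linarith
    have h2 : fval ≠ 0 := h.ne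
    rw [hpos_iff] at h1
    rw [Ne, hzero_iff] at h2
    have := hle x hx
    exact h2 (le_antisymm (by linarith) (not_lt.mp h1))
  · intro h x hx
    have h1 := hzero_iff.mp h
    constructor
    · intro hxe
      by_contra hne
      rcases lt_or_gt_of_ne hne with h2 | h2
      · have := hinc x xM h2 le_rfl
        linarith
      · have := hdec xM x le_rfl h2 hx.2
        linarith
    · rintro rfl
      exact h1.symm
  · intro h
    have h1 := hpos_iff.mp h
    have hP0 : P 0 = 0 := by rw [hPe]; ring
    have hPr : P r₀ = 0 := by rw [hPe]; ring
    obtain ⟨x₁, hx₁, he₁⟩ := intermediate_value_Ioo hxM0.le hcont.continuousOn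
      (show lam ∈ Set.Ioo (P 0) (P xM) from ⟨by linarith, h1⟩)
    obtain ⟨x₂, hx₂, he₂⟩ := intermediate_value_Ioo' hxMr.le hcont.continuousOn
      (show lam ∈ Set.Ioo (P r₀) (P xM) from ⟨by linarith, h1⟩)
    refine ⟨x₁, x₂, hx₁.1, hx₁.2, hx₂.1, hx₂.2, he₁, he₂, ?_⟩
    intro x hx hxe
    rcases le_total x xM with h2 | h2
    · left
      by_contra hne
      rcases lt_or_gt_of_ne hne with h3 | h3
      · have := hinc x x₁ h3 hx₁.2.le
        linarith
      · have := hinc x₁ x h3 h2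
        linarith
    · right
      by_contra hne
      rcases lt_or_gt_of_ne hne with h3 | h3
      · have := hdec x x₂ h2 h3 (by linarith [hx₂.2])
        linarith
      · have := hdec x₂ x hx₂.1.le h3 hx.2
        linarith
end

section
/- Assume either (i) φ₀ > 0 and 0 < ρ₀ < (1 − φ₀)/(1 + φ₀), or (ii) φ₀ < 0 and f(ρ₀, φ₀) < 0. Then the vector field X has no critical points in the closed disk D_R of radius R centered at the origin; that is, X(x, y) ≠ 0 for every (x, y) ∈ D_R with (x, y) ≠ (r₀, 0). (Cases (a) and (e) of Theorem 1: the dynamics in D_R is a global vortex around (r₀, 0).) -/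
/-- Scaled critical points on the axis. -/
lemma axis_pos (p φ u : ℝ) (hp : 0 < p) (hp1 : p < 1) (hφ : 0 < φ) (h : p < (1 - φ) / (1 + φ))
    (hu : u ^ 2 ≤ 1) (e : φ * (u * (u - p) * (1 - p * u)) = 1 - p ^ 2) : False := by
  rw [lt_div_iff₀ (by linarith)] at h
  have hu' := abs_le_of_sq_le_sq' (a := u) (b := 1) (by linarith) (by norm_num)
  obtain ⟨h1, h2⟩ := hu'
  have a0 : |u| ≤ 1 := abs_le.2 ⟨h1, h2⟩
  have a1 : |u - p| ≤ 1 + p := abs_le.2 ⟨by linarith, by linarith⟩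
  have a2 : |1 - p * u| ≤ 1 + p := abs_le.2 ⟨by nlinarith, by nlinarith⟩
  have g : u * (u - p) * (1 - p * u) ≤ 1 * (1 + p) * (1 + p) := by
    refine (le_abs_self _).trans ?_
    rw [abs_mul, abs_mul]
    gcongr
  have := mul_le_mul_of_nonneg_left g hφ.le
  nlinarith

lemma axis_neg (p φ u : ℝ) (hp : 0 < p) (hp1 : p < 1) (hφ : φ < 0)
    (h : 27 * p ^ 2 * (p ^ 2 - 1) +
      φ * (2 - 3 * p ^ 2 - 3 * p ^ 4 + 2 * p ^ 6 -
        2 * (1 - p ^ 2 + p ^ 4) ^ ((3 : ℝ) / 2)) < 0)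
    (hu : u ^ 2 ≤ 1) (e : φ * (u * (u - p) * (1 - p * u)) = 1 - p ^ 2) : False := by
  obtain ⟨h1, h2⟩ := abs_le_of_sq_le_sq' (a := u) (b := 1) (by linarith) (by norm_num)
  have hQ : 3 / 4 ≤ 1 - p ^ 2 + p ^ 4 := by nlinarith [sq_nonneg (p ^ 2 - 1 / 2)]
  obtain ⟨q, hq0, hq⟩ : ∃ q : ℝ, 0 ≤ q ∧ q ^ 2 = 1 - p ^ 2 + p ^ 4 :=
    ⟨Real.sqrt (1 - p ^ 2 + p ^ 4), Real.sqrt_nonneg _, Real.sq_sqrt (by linarith)⟩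
  have hq3 : (1 - p ^ 2 + p ^ 4) ^ ((3 : ℝ) / 2) = q ^ 3 := by
    rw [← hq, ← Real.rpow_natCast q 2, ← Real.rpow_mul hq0, ← Real.rpow_natCast q 3]
    norm_num
  rw [hq3] at h
  have hq1 : 1 / 2 ≤ q := by nlinarith
  have hs : 3 * p * u - 1 - p ^ 2 - 2 * q ≤ 0 := by nlinarith
  have key := mul_nonneg_of_nonpos_of_nonpos hs
    (neg_nonpos.2 (sq_nonneg (3 * p * u - 1 - p ^ 2 + q)))
  have e2 : (3 * p * u - 1 - p ^ 2 - 2 * q) * -(3 * p * u - 1 - p ^ 2 + q) ^ 2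
      = 2 * q ^ 3 - (2 - 3 * p ^ 2 - 3 * p ^ 4 + 2 * p ^ 6)
        + 27 * p ^ 2 * (u * (u - p) * (1 - p * u)) := by
    linear_combination (3 * (3 * p * u - 1 - p ^ 2)) * hq
  rw [e2] at key
  have k2 := mul_nonneg (neg_nonneg.2 hφ.le) key
  have e3 : 27 * p ^ 2 * (φ * (u * (u - p) * (1 - p * u))) = 27 * p ^ 2 * (1 - p ^ 2) := by rw [e]
  linarith

set_option maxHeartbeats 2000000 in
/-- cases (a) and (e) of Theorem 1: if either `φ₀ > 0` with
`0 < ρ₀ < (1 − φ₀)/(1 + φ₀)`, or `φ₀ < 0` with `f(ρ₀, φ₀) < 0`, then `X` has no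
critical points in the closed disk `D_R`: the dynamics is a global vortex around
`(r₀, 0)`. -/
theorem global_vortex_no_critical_points
    (R r₀ θ₀ Γ : ℝ)
    (hR : 0 < R) (hr₀ : 0 < r₀) (hrR : r₀ < R) (hθ : θ₀ ≠ 0) (hΓ : Γ ≠ 0)
    (c ρ₀ φ₀ : ℝ) (hc : c = Γ / (2 * Real.pi * θ₀))
    (hρ : ρ₀ = r₀ / R) (hφ : φ₀ = R ^ 2 / c)
    (fval : ℝ)
    (hf : fval = 27 * ρ₀ ^ 2 * (ρ₀ ^ 2 - 1) +
      φ₀ * (2 - 3 * ρ₀ ^ 2 - 3 * ρ₀ ^ 4 + 2 * ρ₀ ^ 6 -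
        2 * (1 - ρ₀ ^ 2 + ρ₀ ^ 4) ^ ((3 : ℝ) / 2)))
    (hregion : (0 < φ₀ ∧ 0 < ρ₀ ∧ ρ₀ < (1 - φ₀) / (1 + φ₀)) ∨ (φ₀ < 0 ∧ fval < 0))
    (X : ℝ → ℝ → ℝ × ℝ)
    (hX : ∀ x y : ℝ, X x y =
      (-θ₀ * y + c * θ₀ * y *
          (1 / ((x - r₀) ^ 2 + y ^ 2) - 1 / ((x - R ^ 2 / r₀) ^ 2 + y ^ 2)),
       θ₀ * x - c * θ₀ *
          ((x - r₀) / ((x - r₀) ^ 2 + y ^ 2) -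
            (x - R ^ 2 / r₀) / ((x - R ^ 2 / r₀) ^ 2 + y ^ 2)))) :
    ∀ x y : ℝ, x ^ 2 + y ^ 2 ≤ R ^ 2 → (x, y) ≠ (r₀, 0) → X x y ≠ (0, 0) := by
  intro x y hxy hne hX0
  have hc0 : c ≠ 0 := by
    rw [hc]
    exact div_ne_zero hΓ (mul_ne_zero (mul_ne_zero two_ne_zero Real.pi_ne_zero) hθ)
  have hp : 0 < ρ₀ := hρ ▸ div_pos hr₀ hR
  have hp1 : ρ₀ < 1 := by rw [hρ, div_lt_one hR]; exact hrR
  have hr : r₀ = R * ρ₀ := by rw [hρ]; field_simp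
  have hcφ : c * φ₀ = R ^ 2 := by rw [hφ]; field_simp
  obtain ⟨u, hu⟩ : ∃ u, x = R * u := ⟨x / R, by field_simp⟩
  obtain ⟨v, hv⟩ : ∃ v, y = R * v := ⟨y / R, by field_simp⟩
  have hb : R ^ 2 / r₀ = R * (1 / ρ₀) := by rw [hr]; field_simp
  have huv : u ^ 2 + v ^ 2 ≤ 1 := by
    rw [hu, hv] at hxy
    have : 0 < R ^ 2 := by positivity
    nlinarith
  have hup : ¬ (u = ρ₀ ∧ v = 0) := by
    rintro ⟨h1, h2⟩
    apply hne
    rw [hu, hv, h1, h2, hr, mul_zero]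
  have hu2 : u ^ 2 ≤ 1 := by nlinarith [sq_nonneg v]
  have hu1 : u ≤ 1 := (abs_le_of_sq_le_sq' (a := u) (b := 1) (by linarith) (by norm_num)).2
  have hu0 : -1 ≤ u := (abs_le_of_sq_le_sq' (a := u) (b := 1) (by linarith) (by norm_num)).1
  have hpu : 0 < 1 - ρ₀ * u := by nlinarith
  have hA : 0 < (u - ρ₀) ^ 2 + v ^ 2 := by
    rcases lt_or_eq_of_le (add_nonneg (sq_nonneg (u - ρ₀)) (sq_nonneg v)) with h | h
    · exact h
    · exfalso
      apply hup
      constructor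
      · nlinarith [sq_nonneg (u - ρ₀), sq_nonneg v]
      · nlinarith [sq_nonneg (u - ρ₀), sq_nonneg v]
  have hB : 0 < (1 - ρ₀ * u) ^ 2 + ρ₀ ^ 2 * v ^ 2 := by positivity
  rw [hX, Prod.mk.injEq, hb, hr, hu, hv] at hX0
  obtain ⟨E1, E2⟩ := hX0
  have dA : (R * u - R * ρ₀) ^ 2 + (R * v) ^ 2 = R ^ 2 * ((u - ρ₀) ^ 2 + v ^ 2) := by ring
  have dB : (R * u - R * (1 / ρ₀)) ^ 2 + (R * v) ^ 2
      = R ^ 2 * ((1 - ρ₀ * u) ^ 2 + ρ₀ ^ 2 * v ^ 2) / ρ₀ ^ 2 := by field_simp; ring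
  rw [dA, dB] at E1 E2
  generalize hAe : (u - ρ₀) ^ 2 + v ^ 2 = A at *
  generalize hBe : (1 - ρ₀ * u) ^ 2 + ρ₀ ^ 2 * v ^ 2 = B at *
  have hφ0 : φ₀ ≠ 0 := by
    rcases hregion with h | h
    · exact h.1.ne'
    · exact h.1.ne
  have hcc : c = R ^ 2 / φ₀ := by field_simp; linarith
  have F1 : v * (φ₀ * (A * B) - (B - ρ₀ ^ 2 * A)) = 0 := by
    rw [hcc] at E1
    have hne1 : -(θ₀ * R / (φ₀ * A * B)) ≠ 0 :=
      neg_ne_zero.2 (div_ne_zero (mul_ne_zero hθ hR.ne')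
        (mul_ne_zero (mul_ne_zero hφ0 hA.ne') hB.ne'))
    apply mul_left_cancel₀ hne1
    rw [mul_zero, ← E1]
    clear E1 E2
    field_simp
    ring
  have F2 : φ₀ * u * (A * B) = (u - ρ₀) * B + ρ₀ * (1 - ρ₀ * u) * A := by
    rw [hcc] at E2
    have hne1 : θ₀ * R / (φ₀ * A * B) ≠ 0 :=
      div_ne_zero (mul_ne_zero hθ hR.ne')
        (mul_ne_zero (mul_ne_zero hφ0 hA.ne') hB.ne')
    apply sub_eq_zero.1
    apply mul_left_cancel₀ hne1
    rw [mul_zero, ← E2]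
    clear E1 E2
    field_simp
    ring
  have hAB : B - A = (1 - ρ₀ ^ 2) * (1 - u ^ 2 - v ^ 2) := by rw [← hAe, ← hBe]; ring
  have hpp : 0 < 1 - ρ₀ ^ 2 := by
    have := mul_pos (sub_pos.2 hp1) (by linarith : 0 < 1 + ρ₀)
    linarith
  rcases mul_eq_zero.1 F1 with hv0 | F1
  · subst hv0
    have hup' : u - ρ₀ ≠ 0 := fun h => hup ⟨by linarith, rfl⟩
    have e : φ₀ * (u * (u - ρ₀) * (1 - ρ₀ * u)) = 1 - ρ₀ ^ 2 := by
      have hne2 : (u - ρ₀) * (1 - ρ₀ * u) ≠ 0 := mul_ne_zero hup' hpu.ne'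
      apply mul_left_cancel₀ hne2
      rw [← hAe, ← hBe] at F2
      linear_combination F2
    rcases hregion with ⟨h1, _, h3⟩ | ⟨h1, h2⟩
    · exact axis_pos _ _ _ hp hp1 h1 h3 hu2 e
    · exact axis_neg _ _ _ hp hp1 h1 (hf ▸ h2) hu2 e
  · have hBA : ρ₀ * (A - B) = 0 := by linear_combination u * F1 - F2
    have hBA' : A = B := by
      rcases mul_eq_zero.1 hBA with h | h
      · exact absurd h hp.ne'
      · linarith
    subst hBA'
    have e : φ₀ * A = 1 - ρ₀ ^ 2 := by
      apply mul_left_cancel₀ hA.ne'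
      linear_combination F1
    rcases hregion with ⟨h1, _, h3⟩ | ⟨h1, h2⟩
    · rw [lt_div_iff₀ (by linarith)] at h3
      have : A ≤ (1 + ρ₀) ^ 2 := by
        have := mul_nonneg hp.le (by linarith : 0 ≤ 1 + u)
        linarith
      have h4 := mul_le_mul_of_nonneg_left this h1.le
      have h5 : (1 + ρ₀) * (ρ₀ * (1 + φ₀)) < (1 + ρ₀) * (1 - φ₀) :=
        mul_lt_mul_of_pos_left h3 (by linarith)
      linarith
    · have := mul_neg_of_neg_of_pos h1 hA
      linarith
end

section
/- Assume φ₀ > 0 and ρ₀ > max{(1 − φ₀)/(1 + φ₀), (φ₀ − 1)/(1 + φ₀)}. Then the set of critical points of X in the closed disk D_R consists of exactly three points: a point (x_c, 0) with x_c ∈ (−R, 0) at which det DX > 0 (a center), and the two points (x_s*, y_s*) and (x_s*, −y_s*) lying on the boundary circle x² + y² = R², at which det DX < 0 (hyperbolic saddles), where x_s* = (R² + r₀²)/(2r₀) − (c/(2r₀))·(1 − r₀²/R²) and (y_s*)² = (1/4)·(2(c² + R⁴)/R² − (c − R²)²/r₀² − (c + R²)²·r₀²/R⁴). (Case (b) of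 Theorem 1.) -/
set_option maxHeartbeats 2000000

lemma det_formula (θ c r b : ℝ) (X : ℝ → ℝ → ℝ × ℝ)
    (hX : ∀ x y : ℝ, X x y =
      (-θ * y + c * θ * y * (1 / ((x - r) ^ 2 + y ^ 2) - 1 / ((x - b) ^ 2 + y ^ 2)),
       θ * x - c * θ * ((x - r) / ((x - r) ^ 2 + y ^ 2) - (x - b) / ((x - b) ^ 2 + y ^ 2))))
    (x y : ℝ) (hA : (x - r) ^ 2 + y ^ 2 ≠ 0) (hB : (x - b) ^ 2 + y ^ 2 ≠ 0) :
    (jacobianMatrix X x y).det = θ ^ 2 * (1 - (c * (b - r)) ^ 2 *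
      ((2 * x - r - b) ^ 2 + 4 * y ^ 2) /
        (((x - r) ^ 2 + y ^ 2) ^ 2 * ((x - b) ^ 2 + y ^ 2) ^ 2)) := by
  have qx : ∀ e : ℝ, HasDerivAt (fun s : ℝ => (s - e) ^ 2 + y ^ 2) (2 * (x - e)) x := by
    intro e
    have := (((hasDerivAt_id x).sub_const e).pow 2).add_const (y ^ 2)
    simpa using this
  have qy : ∀ e : ℝ, HasDerivAt (fun s : ℝ => (x - e) ^ 2 + s ^ 2) (2 * y) y := by
    intro e
    have := ((hasDerivAt_id y).pow 2).const_add ((x - e) ^ 2)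
    simpa using this
  have lx : ∀ e : ℝ, HasDerivAt (fun s : ℝ => s - e) 1 x := fun e =>
    (hasDerivAt_id x).sub_const e
  have ly : HasDerivAt (fun s : ℝ => s) 1 y := hasDerivAt_id y
  have lx0 : HasDerivAt (fun s : ℝ => s) 1 x := hasDerivAt_id x
  have d11 := (((((hasDerivAt_const x (1 : ℝ)).fun_div (qx r) hA).fun_sub
    ((hasDerivAt_const x (1 : ℝ)).fun_div (qx b) hB)).const_mul (c * θ * y)).const_add (-θ * y)).deriv
  have d12 := ((ly.const_mul (-θ)).fun_add ((ly.const_mul (c * θ)).fun_mul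
    (((hasDerivAt_const y (1 : ℝ)).fun_div (qy r) hA).fun_sub
    ((hasDerivAt_const y (1 : ℝ)).fun_div (qy b) hB)))).deriv
  have d21 := ((lx0.const_mul θ).fun_sub ((((lx r).fun_div (qx r) hA).fun_sub
    ((lx b).fun_div (qx b) hB)).const_mul (c * θ))).deriv
  have d22 := (((((hasDerivAt_const y (x - r)).fun_div (qy r) hA).fun_sub
    ((hasDerivAt_const y (x - b)).fun_div (qy b) hB)).const_mul (c * θ)).const_sub (θ * x)).deriv
  simp only [jacobianMatrix, Matrix.det_fin_two_of, hX]
  rw [d11, d12, d21, d22]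
  field_simp
  ring

lemma sq_pos_of_neg_aux {t : ℝ} (h : t < 0) : 0 < t ^ 2 := by nlinarith

/-- case (b) of Theorem 1: for `φ₀ > 0` and
`ρ₀ > max{(1−φ₀)/(1+φ₀), (φ₀−1)/(1+φ₀)}` the critical points of `X` in `D_R` are
exactly a center `(x_c, 0)` with `x_c ∈ (−R, 0)` and two hyperbolic saddles
`(x_s*, ±y_s*)` on the boundary circle. -/
theorem case_b_three_critical_points
    (R r₀ θ₀ Γ : ℝ)
    (hR : 0 < R) (hr₀ : 0 < r₀) (hrR : r₀ < R) (hθ : θ₀ ≠ 0) (hΓ : Γ ≠ 0)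
    (c ρ₀ φ₀ : ℝ) (hc : c = Γ / (2 * Real.pi * θ₀))
    (hρ : ρ₀ = r₀ / R) (hφ : φ₀ = R ^ 2 / c) (hφpos : 0 < φ₀)
    (hregion : max ((1 - φ₀) / (1 + φ₀)) ((φ₀ - 1) / (1 + φ₀)) < ρ₀)
    (X : ℝ → ℝ → ℝ × ℝ)
    (hX : ∀ x y : ℝ, X x y =
      (-θ₀ * y + c * θ₀ * y *
          (1 / ((x - r₀) ^ 2 + y ^ 2) - 1 / ((x - R ^ 2 / r₀) ^ 2 + y ^ 2)),
       θ₀ * x - c * θ₀ *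
          ((x - r₀) / ((x - r₀) ^ 2 + y ^ 2) -
            (x - R ^ 2 / r₀) / ((x - R ^ 2 / r₀) ^ 2 + y ^ 2))))
    (xs : ℝ)
    (hxs : xs = (R ^ 2 + r₀ ^ 2) / (2 * r₀) - (c / (2 * r₀)) * (1 - r₀ ^ 2 / R ^ 2)) :
    ∃ xc ys : ℝ,
      (-R < xc ∧ xc < 0) ∧ X xc 0 = (0, 0) ∧ 0 < (jacobianMatrix X xc 0).det ∧
      0 < ys ∧
      ys ^ 2 = (1 / 4) * (2 * (c ^ 2 + R ^ 4) / R ^ 2 - (c - R ^ 2) ^ 2 / r₀ ^ 2 -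
        (c + R ^ 2) ^ 2 * r₀ ^ 2 / R ^ 4) ∧
      xs ^ 2 + ys ^ 2 = R ^ 2 ∧
      X xs ys = (0, 0) ∧ X xs (-ys) = (0, 0) ∧
      (jacobianMatrix X xs ys).det < 0 ∧ (jacobianMatrix X xs (-ys)).det < 0 ∧
      (∀ x y : ℝ, x ^ 2 + y ^ 2 ≤ R ^ 2 → (x, y) ≠ (r₀, 0) → X x y = (0, 0) →
        (x, y) = (xc, 0) ∨ (x, y) = (xs, ys) ∨ (x, y) = (xs, -ys)) := by
  have hcne : c ≠ 0 := by
    rintro rfl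
    simp at hφ
    linarith
  have hcpos : 0 < c := by
    by_contra h
    have : c < 0 := lt_of_le_of_ne (not_lt.mp h) hcne
    have : R ^ 2 / c < 0 := div_neg_of_pos_of_neg (by positivity) this
    linarith
  obtain ⟨h1, h2⟩ := max_lt_iff.mp hregion
  have hφc : φ₀ * c = R ^ 2 := by rw [hφ]; field_simp
  have hρR : ρ₀ * R = r₀ := by rw [hρ]; field_simp
  rw [div_lt_iff₀ (by linarith)] at h1 h2
  have hRc : 0 < R * c := by positivity
  have k1 : c * (R - r₀) < R ^ 2 * (R + r₀) := by
    have := mul_lt_mul_of_pos_right h1 hRc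
    rw [← hφc, ← hρR]; linarith
  have k2 : R ^ 2 * (R - r₀) < c * (R + r₀) := by
    have := mul_lt_mul_of_pos_right h2 hRc
    rw [← hφc, ← hρR]; linarith
  clear hregion h1 h2
  obtain ⟨b, hb⟩ : ∃ b, b = R ^ 2 / r₀ := ⟨_, rfl⟩
  rw [← hb] at hX
  have hrb : r₀ * b = R ^ 2 := by rw [hb]; field_simp
  have hbR : R < b := by
    rw [hb, lt_div_iff₀ hr₀]; nlinarith
  have hA0 : 0 < c * (1 - r₀ ^ 2 / R ^ 2) := by
    apply mul_pos hcpos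
    rw [sub_pos, div_lt_one (by positivity)]
    nlinarith
  obtain ⟨A, hA⟩ : ∃ A, A = c * (1 - r₀ ^ 2 / R ^ 2) := ⟨_, rfl⟩
  rw [← hA] at hA0
  have hAR : A * R ^ 2 = c * (R - r₀) * (R + r₀) := by rw [hA]; field_simp; ring
  have hAb : A * b = c * (b - r₀) := by
    rw [hA, hb]; field_simp
  have hxA : 2 * r₀ * xs = R ^ 2 + r₀ ^ 2 - A := by rw [hxs, hA]; field_simp
  have hA1 : (R - r₀) ^ 2 < A := by
    have : (R - r₀) ^ 2 * R ^ 2 < A * R ^ 2 := by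
      rw [hAR]; linarith [mul_lt_mul_of_pos_right k2 (sub_pos.mpr hrR)]
    exact lt_of_mul_lt_mul_right this (by positivity)
  have hA2 : A < (R + r₀) ^ 2 := by
    have : A * R ^ 2 < (R + r₀) ^ 2 * R ^ 2 := by
      rw [hAR]; linarith [mul_lt_mul_of_pos_right k1 (add_pos hR hr₀)]
    exact lt_of_mul_lt_mul_right this (by positivity)
  have hx1 : xs < R := by
    have : 2 * r₀ * xs < 2 * r₀ * R := by linarith
    exact lt_of_mul_lt_mul_left this (by positivity)
  have hx2 : -R < xs := by
    have : 2 * r₀ * (-R) < 2 * r₀ * xs := by linarith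
    exact lt_of_mul_lt_mul_left this (by positivity)
  have hys0 : 0 < R ^ 2 - xs ^ 2 := by
    linarith [mul_pos (sub_pos.mpr hx1) (sub_pos.mpr hx2)]
  -- the boundary points
  obtain ⟨ys, hyspos, hys⟩ : ∃ ys : ℝ, 0 < ys ∧ ys ^ 2 = R ^ 2 - xs ^ 2 :=
    ⟨Real.sqrt (R ^ 2 - xs ^ 2), Real.sqrt_pos.mpr hys0, Real.sq_sqrt hys0.le⟩
  have hsA : ∀ y : ℝ, y ^ 2 = R ^ 2 - xs ^ 2 → (xs - r₀) ^ 2 + y ^ 2 = A := by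
    intro y hy; rw [hy]; linarith
  have hsB : ∀ y : ℝ, y ^ 2 = R ^ 2 - xs ^ 2 → (xs - b) ^ 2 + y ^ 2 = A * b / r₀ := by
    intro y hy; rw [hy, eq_div_iff hr₀.ne']
    have e : A = R ^ 2 + r₀ ^ 2 - 2 * r₀ * xs := by linarith
    rw [e]
    linear_combination (b - r₀) * hrb
  have hb0 : 0 < b := by linarith
  have hbr : 0 < b - r₀ := by linarith
  have hc' : c = A * b / (b - r₀) := by rw [eq_div_iff hbr.ne']; linarith
  have hXs : ∀ y : ℝ, y ^ 2 = R ^ 2 - xs ^ 2 → X xs y = (0, 0) := by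
    intro y hy
    rw [hX, hsA y hy, hsB y hy, hc']
    ext
    · simp only
      field_simp
      ring
    · simp only
      field_simp
      ring
  have hdet : ∀ y : ℝ, y ≠ 0 → y ^ 2 = R ^ 2 - xs ^ 2 → (jacobianMatrix X xs y).det < 0 := by
    intro y hy0 hy
    have e1 := hsA y hy
    have e2 := hsB y hy
    rw [det_formula θ₀ c r₀ b X hX xs y (by rw [e1]; positivity) (by rw [e2]; positivity), e1, e2,
      ← hAb]
    have e3 : (A * b) ^ 2 * ((2 * xs - r₀ - b) ^ 2 + 4 * y ^ 2) / (A ^ 2 * (A * b / r₀) ^ 2)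
        = 1 + 4 * r₀ ^ 2 * y ^ 2 / A ^ 2 := by
      have : r₀ * (2 * xs - r₀ - b) = -A := by linear_combination hxA - hrb
      have h' : r₀ ^ 2 * (2 * xs - r₀ - b) ^ 2 = A ^ 2 := by
        rw [← mul_pow, this]; ring
      field_simp
      linear_combination h'
    rw [e3]
    have : 0 < θ₀ ^ 2 * (4 * r₀ ^ 2 * y ^ 2 / A ^ 2) := by positivity
    linarith
  -- the cubic
  have hcub : ∃ xc ∈ Set.Icc (-R) 0, xc * (xc - r₀) * (xc - b) = -c * (b - r₀) := by
    have hcont : ContinuousOn (fun x : ℝ => x * (x - r₀) * (x - b)) (Set.Icc (-R) 0) := by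
      fun_prop
    have := intermediate_value_Icc (by linarith : -R ≤ 0) hcont
    apply this
    constructor
    · have : r₀ * (-R * (-R - r₀) * (-R - b)) ≤ r₀ * (-c * (b - r₀)) := by
        have e1 : r₀ * (-R * (-R - r₀) * (-R - b)) = - (R ^ 2 * (R + r₀)) * (R + r₀) := by
          linear_combination (-R * (R + r₀)) * hrb
        have e2 : r₀ * (-c * (b - r₀)) = - (c * (R - r₀)) * (R + r₀) := by
          linear_combination (-c) * hrb
        rw [e1, e2]
        linarith [mul_lt_mul_of_pos_right k1 (add_pos hR hr₀)]
      exact le_of_mul_le_mul_left this hr₀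
    · simp only [zero_mul]
      linarith [mul_pos hcpos hbr]
  obtain ⟨xc, ⟨hxc1, hxc2⟩, hxc⟩ := hcub
  have hxc2' : xc < 0 := by
    rcases hxc2.lt_or_eq with h | h
    · exact h
    · rw [h] at hxc; simp at hxc; rcases hxc with h | h <;> linarith
  have hxc1' : -R < xc := by
    rcases hxc1.lt_or_eq with h | h
    · exact h
    · exfalso
      rw [← h] at hxc
      have : R ^ 2 * (R + r₀) * (R + r₀) = c * (R - r₀) * (R + r₀) := by
        linear_combination (-r₀) * hxc - (R * (R + r₀) - c) * hrb
      linarith [mul_lt_mul_of_pos_right k1 (add_pos hR hr₀)]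
  have ha1 : xc - r₀ < 0 := by linarith
  have ha2 : xc - b < 0 := by linarith
  refine ⟨xc, ys, ⟨hxc1', hxc2'⟩, ?_, ?_, hyspos, ?_, by linarith, hXs ys hys,
    hXs (-ys) (by rw [neg_sq, hys]), hdet ys hyspos.ne' hys,
    hdet (-ys) (neg_ne_zero.mpr hyspos.ne') (by rw [neg_sq, hys]), ?_⟩
  · rw [hX]
    have n1 := ha1.ne
    have n2 := ha2.ne
    ext
    · simp
    · simp only
      have : xc = c * ((xc - r₀) / ((xc - r₀) ^ 2 + 0 ^ 2) - (xc - b) / ((xc - b) ^ 2 + 0 ^ 2)) := by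
        have e : (xc - r₀) / ((xc - r₀) ^ 2 + 0 ^ 2) - (xc - b) / ((xc - b) ^ 2 + 0 ^ 2)
          = (r₀ - b) / ((xc - r₀) * (xc - b)) := by field_simp; ring
        rw [e, ← mul_div_assoc, eq_div_iff (mul_ne_zero n1 n2)]
        linear_combination hxc
      linear_combination θ₀ * this
  · have p1 : 0 < (xc - r₀) ^ 2 := sq_pos_of_neg_aux ha1
    have p2 : 0 < (xc - b) ^ 2 := sq_pos_of_neg_aux ha2
    rw [det_formula θ₀ c r₀ b X hX xc 0 (by simpa using p1.ne') (by simpa using p2.ne')]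
    have hsq : (c * (b - r₀)) ^ 2 = (xc * (xc - r₀) * (xc - b)) ^ 2 := by rw [hxc]; ring
    apply mul_pos (by positivity)
    rw [sub_pos, div_lt_one (by simp only [ne_eq, OfNat.ofNat_ne_zero, not_false_eq_true, zero_pow, add_zero]; positivity), hsq]
    have q : (xc * (2 * xc - r₀ - b)) ^ 2 < ((xc - r₀) * (xc - b)) ^ 2 := by
      have u1 : 0 < xc * (2 * xc - r₀ - b) := mul_pos_of_neg_of_neg hxc2' (by linarith)
      have u2 : xc * (2 * xc - r₀ - b) < (xc - r₀) * (xc - b) := by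
        linarith [mul_pos (by linarith : 0 < R - xc) (by linarith : 0 < R + xc), hrb]
      exact pow_lt_pow_left₀ u2 u1.le two_ne_zero
    have p3 := mul_lt_mul_of_pos_right q (mul_pos p1 p2)
    linarith
  · rw [hys, hxs]; field_simp; ring
  · intro x y hxy hne h0
    rw [hX, Prod.mk.injEq] at h0
    obtain ⟨g1, g2⟩ := h0
    have hxx : x ^ 2 ≤ R ^ 2 := by linarith [sq_nonneg y]
    have hxR : x ≤ R := (abs_le_of_sq_le_sq' hxx hR.le).2
    have hxR' : -R ≤ x := (abs_le_of_sq_le_sq' hxx hR.le).1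
    have hBpos : 0 < (x - b) ^ 2 + y ^ 2 := by
      have : 0 < (x - b) ^ 2 := sq_pos_of_neg_aux (by linarith)
      positivity
    have hApos : 0 < (x - r₀) ^ 2 + y ^ 2 := by
      rcases eq_or_ne y 0 with hy | hy
      · have : x - r₀ ≠ 0 := by
          intro h
          exact hne (by rw [hy, sub_eq_zero.mp h])
        positivity
      · positivity
    rcases eq_or_ne y 0 with hy | hy
    · left
      subst hy
      have n1 : x - r₀ ≠ 0 := by
        intro h
        rw [h] at hApos; simp at hApos
      have n2 : x - b ≠ 0 := by
        intro h
        rw [h] at hBpos; simp at hBpos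
      have e : (x - r₀) / ((x - r₀) ^ 2 + 0 ^ 2) - (x - b) / ((x - b) ^ 2 + 0 ^ 2)
          = (r₀ - b) / ((x - r₀) * (x - b)) := by field_simp; ring
      have g3 : θ₀ * (x - c * ((r₀ - b) / ((x - r₀) * (x - b)))) = 0 := by
        rw [← e]; linear_combination g2
      have g4 : x = c * ((r₀ - b) / ((x - r₀) * (x - b))) := by
        rcases mul_eq_zero.mp g3 with h | h
        · exact absurd h hθ
        · linarith
      rw [← mul_div_assoc, eq_div_iff (mul_ne_zero n1 n2)] at g4
      have hcb : 0 < c * (b - r₀) := by positivity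
      rcases lt_or_ge x 0 with hx | hx
      · have hfac : (x - xc) * (x ^ 2 + x * xc + xc ^ 2 - (r₀ + b) * (x + xc) + r₀ * b) = 0 := by
          linear_combination g4 - hxc
        have hpos : 0 < x ^ 2 + x * xc + xc ^ 2 - (r₀ + b) * (x + xc) + r₀ * b := by
          have : 0 < x * xc := mul_pos_of_neg_of_neg hx hxc2'
          have : 0 < (r₀ + b) * (-(x + xc)) := mul_pos (by linarith) (by linarith)
          have : 0 < r₀ * b := by positivity
          linarith [sq_nonneg x, sq_nonneg xc]
        rcases mul_eq_zero.mp hfac with h | h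
        · rw [sub_eq_zero.mp h]
        · exact absurd h hpos.ne'
      · exfalso
        rcases le_or_gt x r₀ with hxr | hxr
        · have : 0 ≤ x * ((r₀ - x) * (b - x)) :=
            mul_nonneg hx (mul_nonneg (by linarith) (by linarith))
          linarith
        · have hs : 2 * R ≤ r₀ + b := by
            have : 2 * R * r₀ ≤ (r₀ + b) * r₀ := by linarith [sq_nonneg (R - r₀)]
            exact le_of_mul_le_mul_right this hr₀
          have f1 : x ^ 2 + x * R + R ^ 2 - (r₀ + b) * (x + R) + R ^ 2 ≤ 0 := by
            linarith [mul_le_mul_of_nonneg_right hs (by linarith : 0 ≤ x + R),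
              mul_nonneg hx (by linarith : 0 ≤ R - x)]
          have f2 : 0 ≤ (R - x) * -(x ^ 2 + x * R + R ^ 2 - (r₀ + b) * (x + R) + R ^ 2) :=
            mul_nonneg (by linarith) (by linarith)
          have f3 : R * (R - r₀) * (R - b) ≤ x * ((x - r₀) * (x - b)) := by
            have : x * ((x - r₀) * (x - b)) - R * (R - r₀) * (R - b)
              = (R - x) * -(x ^ 2 + x * R + R ^ 2 - (r₀ + b) * (x + R) + R ^ 2) := by
              linear_combination (x - R) * hrb
            linarith
          rw [g4] at f3
          have f4 : r₀ * (R * (R - r₀) * (R - b)) ≤ r₀ * (c * (r₀ - b)) :=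
            mul_le_mul_of_nonneg_left f3 hr₀.le
          have f5 : r₀ * (R * (R - r₀) * (R - b)) = -(R ^ 2 * (R - r₀)) * (R - r₀) := by
            linear_combination (-R * (R - r₀)) * hrb
          have f6 : r₀ * (c * (r₀ - b)) = -(c * (R + r₀)) * (R - r₀) := by
            linear_combination (-c) * hrb
          rw [f5, f6] at f4
          linarith [mul_lt_mul_of_pos_right k2 (sub_pos.mpr hrR)]
    · right
      have m1 : c * (1 / ((x - r₀) ^ 2 + y ^ 2) - 1 / ((x - b) ^ 2 + y ^ 2)) = 1 := by
        have : θ₀ * y * (c * (1 / ((x - r₀) ^ 2 + y ^ 2) - 1 / ((x - b) ^ 2 + y ^ 2)) - 1) = 0 := by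
          linear_combination g1
        rcases mul_eq_zero.mp this with h | h
        · exact absurd h (mul_ne_zero hθ hy)
        · linarith
      have m2 : r₀ / ((x - r₀) ^ 2 + y ^ 2) - b / ((x - b) ^ 2 + y ^ 2) = 0 := by
        have : c * θ₀ * (r₀ / ((x - r₀) ^ 2 + y ^ 2) - b / ((x - b) ^ 2 + y ^ 2)) = 0 := by
          linear_combination g2 + θ₀ * x * m1
        rcases mul_eq_zero.mp this with h | h
        · exact absurd h (mul_ne_zero hcne hθ)
        · exact h
      have m3 : r₀ * ((x - b) ^ 2 + y ^ 2) = b * ((x - r₀) ^ 2 + y ^ 2) := by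
        rw [sub_eq_zero, div_eq_div_iff hApos.ne' hBpos.ne'] at m2
        exact m2
      have m4 : x ^ 2 + y ^ 2 = R ^ 2 := by
        have : (b - r₀) * (R ^ 2 - (x ^ 2 + y ^ 2)) = 0 := by
          linear_combination m3 - (b - r₀) * hrb
        rcases mul_eq_zero.mp this with h | h
        · linarith
        · linarith
      have m5 : (x - b) ^ 2 + y ^ 2 = b * ((x - r₀) ^ 2 + y ^ 2) / r₀ := by
        rw [eq_div_iff hr₀.ne']; linarith
      have m6 : (x - r₀) ^ 2 + y ^ 2 = A := by
        rw [m5] at m1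
        have : c * (b - r₀) = b * ((x - r₀) ^ 2 + y ^ 2) := by
          field_simp at m1
          linarith
        have : b * ((x - r₀) ^ 2 + y ^ 2) = b * A := by linarith
        exact mul_left_cancel₀ hb0.ne' this
      have m7 : x = xs := by
        have : 2 * r₀ * x = 2 * r₀ * xs := by linarith
        exact mul_left_cancel₀ (by positivity) this
      subst m7
      have m8 : y ^ 2 = ys ^ 2 := by linarith
      rcases sq_eq_sq_iff_eq_or_eq_neg.mp m8 with h | h
      · left; rw [h]
      · right; rw [h]
end

section
/- Assume φ₀ < 0 and f(ρ₀, φ₀) > 0. Then the set of critical points of X in the closed disk D_R consists of exactly two points, both on the horizontal axis: points (x_c, 0) and (x_s, 0) with 0 < x_c < x_M < x_s < r₀, where x_M = (R² + r₀² − √(R⁴ − R²r₀² + r₀⁴))/(3r₀); moreover det DX(x_c, 0) > 0 (a center) and det DX(x_s, 0) < 0 (a hyperbolic saddle). (Case (d) of Theorem 1.) -/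
/-- The cubic `x (r - x) (B - x)` takes the value `m` at two points around its local maximum. -/
theorem cubic_roots (r B d m xM : ℝ) (hr : 0 < r) (hrB : r < B) (hd : 0 < d)
    (hd2 : d ^ 2 = r ^ 2 + B ^ 2 - r * B) (hxM : xM = (r + B - d) / 3) (hm : 0 < m)
    (hmax : m < xM * (r - xM) * (B - xM)) :
    ∃ xc xs : ℝ, 0 < xc ∧ xc < xM ∧ xM < xs ∧ xs < r ∧
      xc * (r - xc) * (B - xc) = m ∧ xs * (r - xs) * (B - xs) = m ∧
      0 < 3 * xc ^ 2 - 2 * (r + B) * xc + r * B ∧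
      3 * xs ^ 2 - 2 * (r + B) * xs + r * B < 0 ∧
      ∀ x, x ≤ B → x * (r - x) * (B - x) = m → x = xc ∨ x = xs := by
  have hrB' : 0 < r * (B - r) := mul_pos hr (by linarith)
  have h1 : d < r + B := by nlinarith
  have h2 : B - 2 * r < d := by nlinarith
  have h3 : 2 * r - B < d := by nlinarith
  have hM0 : 0 < xM := by linarith
  have hMr : xM < r := by linarith
  have hcont : ∀ s : Set ℝ, ContinuousOn (fun x : ℝ => x * (r - x) * (B - x)) s := by
    intro s; fun_prop
  obtain ⟨xc, ⟨hc0, hc1⟩, hc⟩ := intermediate_value_Ioo hM0.le (hcont _)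
    (show m ∈ Set.Ioo _ _ from ⟨by simpa using hm, hmax⟩)
  obtain ⟨xs, ⟨hs0, hs1⟩, hs⟩ := intermediate_value_Ioo' hMr.le (hcont _)
    (show m ∈ Set.Ioo _ _ from ⟨by simpa using hm, hmax⟩)
  simp only at hc hs
  have fac : ∀ x, 3 * x ^ 2 - 2 * (r + B) * x + r * B
      = 3 * ((x - xM) * (x - (r + B + d) / 3)) := by
    intro x; rw [hxM]; linear_combination (1 / 3 : ℝ) * hd2
  refine ⟨xc, xs, hc0, hc1, hs0, hs1, hc, hs, ?_, ?_, ?_⟩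
  · rw [fac]
    have := mul_pos_of_neg_of_neg (show xc - xM < 0 by linarith)
      (show xc - (r + B + d) / 3 < 0 by linarith)
    linarith
  · rw [fac]
    have := mul_neg_of_pos_of_neg (show 0 < xs - xM by linarith)
      (show xs - (r + B + d) / 3 < 0 by linarith)
    linarith
  · intro x hxB hx
    have hne : xs - xc ≠ 0 := by linarith
    -- Vieta
    have hv : xc ^ 2 + xc * xs + xs ^ 2 - (r + B) * (xc + xs) + r * B = 0 := by
      apply mul_left_cancel₀ hne; linear_combination hs - hc
    have hfac : ∀ z, z * (r - z) * (B - z) - m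
        = (z - xc) * (z - xs) * (z - (r + B - xc - xs)) := by
      intro z; linear_combination (z - xc) * hv + hc
    have hB := hfac B
    have ht : B < r + B - xc - xs := by
      by_contra hcon
      have : 0 ≤ (B - xc) * (B - xs) * (B - (r + B - xc - xs)) :=
        mul_nonneg (mul_nonneg (by linarith) (by linarith)) (by linarith)
      simp at hB
      linarith
    have hx' := hfac x
    rw [hx, sub_self] at hx'
    rcases mul_eq_zero.1 hx'.symm with h | h
    · rcases mul_eq_zero.1 h with h | h
      · left; linarith
      · right; linarith
    · exfalso; linarith

/-- The Jacobian determinant on the horizontal axis. -/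
theorem det_axis (r B θ c x : ℝ) (hxr : x - r ≠ 0) (hxB : x - B ≠ 0) (X : ℝ → ℝ → ℝ × ℝ)
    (hX : ∀ x y : ℝ, X x y =
      (-θ * y + c * θ * y *
          (1 / ((x - r) ^ 2 + y ^ 2) - 1 / ((x - B) ^ 2 + y ^ 2)),
       θ * x - c * θ *
          ((x - r) / ((x - r) ^ 2 + y ^ 2) -
            (x - B) / ((x - B) ^ 2 + y ^ 2)))) :
    (jacobianMatrix X x 0).det = θ ^ 2 * (1 - c * (1 / (x - r) ^ 2 - 1 / (x - B) ^ 2)) *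
      (1 + c * (1 / (x - r) ^ 2 - 1 / (x - B) ^ 2)) := by
  have h11 : deriv (fun s => (X s 0).1) x = 0 := by
    have : (fun s => (X s 0).1) = fun _ => (0 : ℝ) := by
      funext s; simp [hX]
    rw [this]; simp
  have hq : ∀ p : ℝ, p ≠ 0 → HasDerivAt (fun s : ℝ => 1 / (p ^ 2 + s ^ 2)) 0 0 := by
    intro p hp
    have h := ((hasDerivAt_pow 2 (0 : ℝ)).const_add (p ^ 2)).fun_inv (by simpa using hp)
    simpa [one_div] using h
  have h12 : deriv (fun s => (X x s).1) 0
      = -θ + c * θ * (1 / (x - r) ^ 2 - 1 / (x - B) ^ 2) := by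
    have e : (fun s => (X x s).1) = fun y => -θ * y + c * θ * y *
          (1 / ((x - r) ^ 2 + y ^ 2) - 1 / ((x - B) ^ 2 + y ^ 2)) := by
      funext s; simp [hX]
    rw [e]
    have h := ((hasDerivAt_id (0 : ℝ)).const_mul (-θ)).fun_add
      (((hasDerivAt_id (0 : ℝ)).const_mul (c * θ)).fun_mul ((hq _ hxr).fun_sub (hq _ hxB)))
    refine (h.congr_deriv ?_).deriv
    simp
  have hi : ∀ p : ℝ, x - p ≠ 0 → HasDerivAt (fun s : ℝ => (s - p)⁻¹) (-1 / (x - p) ^ 2) x := by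
    intro p hp
    exact ((hasDerivAt_id x).sub_const p).fun_inv hp
  have h21 : deriv (fun s => (X s 0).2) x
      = θ + c * θ * (1 / (x - r) ^ 2 - 1 / (x - B) ^ 2) := by
    have e : (fun s => (X s 0).2) = fun s => θ * s - c * θ * ((s - r)⁻¹ - (s - B)⁻¹) := by
      have hz : ∀ z : ℝ, z / (z ^ 2 + 0 ^ 2) = z⁻¹ := by
        intro z
        rcases eq_or_ne z 0 with rfl | h
        · simp
        · field_simp; simp
      funext s; rw [hX]; simp only [hz]
    rw [e]
    have h := ((hasDerivAt_id x).const_mul θ).fun_sub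
      (((hi r hxr).fun_sub (hi B hxB)).const_mul (c * θ))
    refine (h.congr_deriv ?_).deriv
    ring
  rw [jacobianMatrix, Matrix.det_fin_two]
  simp only [Matrix.of_apply, Matrix.cons_val', Matrix.cons_val_zero, Matrix.cons_val_one,
    Matrix.cons_val_fin_one, h11, h12, h21]
  ring

/-- Factorisation of the nontrivial factor of the determinant. -/
theorem det_factor (r B c x : ℝ) (hrB : r < B) (hxr : x < r)
    (hm : x * (r - x) * (B - x) = -c * (B - r)) :
    1 + c * (1 / (x - r) ^ 2 - 1 / (x - B) ^ 2)
      = (3 * x ^ 2 - 2 * (r + B) * x + r * B) / ((r - x) * (B - x)) := by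
  have h1 : r - x ≠ 0 := by linarith
  have h2 : B - x ≠ 0 := by linarith
  have h3 : B - r ≠ 0 := by linarith
  have hc : c = -(x * (r - x) * (B - x)) / (B - r) := by
    field_simp; linarith
  have e1 : (x - r) ^ 2 = (r - x) ^ 2 := by ring
  have e2 : (x - B) ^ 2 = (B - x) ^ 2 := by ring
  rw [hc, e1, e2]
  field_simp
  ring

/-- case (d) of Theorem 1: for `φ₀ < 0` and `f(ρ₀, φ₀) > 0` the
critical points of `X` in `D_R` are exactly a center `(x_c, 0)` and a hyperbolic
saddle `(x_s, 0)` with `0 < x_c < x_M < x_s < r₀`. -/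
theorem case_d_two_critical_points
    (R r₀ θ₀ Γ : ℝ)
    (hR : 0 < R) (hr₀ : 0 < r₀) (hrR : r₀ < R) (hθ : θ₀ ≠ 0) (hΓ : Γ ≠ 0)
    (c ρ₀ φ₀ : ℝ) (hc : c = Γ / (2 * Real.pi * θ₀))
    (hρ : ρ₀ = r₀ / R) (hφ : φ₀ = R ^ 2 / c) (hφneg : φ₀ < 0)
    (fval : ℝ)
    (hf : fval = 27 * ρ₀ ^ 2 * (ρ₀ ^ 2 - 1) +
      φ₀ * (2 - 3 * ρ₀ ^ 2 - 3 * ρ₀ ^ 4 + 2 * ρ₀ ^ 6 -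
        2 * (1 - ρ₀ ^ 2 + ρ₀ ^ 4) ^ ((3 : ℝ) / 2)))
    (hfpos : 0 < fval)
    (xM : ℝ)
    (hxM : xM = (R ^ 2 + r₀ ^ 2 - Real.sqrt (R ^ 4 - R ^ 2 * r₀ ^ 2 + r₀ ^ 4)) / (3 * r₀))
    (X : ℝ → ℝ → ℝ × ℝ)
    (hX : ∀ x y : ℝ, X x y =
      (-θ₀ * y + c * θ₀ * y *
          (1 / ((x - r₀) ^ 2 + y ^ 2) - 1 / ((x - R ^ 2 / r₀) ^ 2 + y ^ 2)),
       θ₀ * x - c * θ₀ *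
          ((x - r₀) / ((x - r₀) ^ 2 + y ^ 2) -
            (x - R ^ 2 / r₀) / ((x - R ^ 2 / r₀) ^ 2 + y ^ 2)))) :
    ∃ xc xs : ℝ,
      0 < xc ∧ xc < xM ∧ xM < xs ∧ xs < r₀ ∧
      X xc 0 = (0, 0) ∧ 0 < (jacobianMatrix X xc 0).det ∧
      X xs 0 = (0, 0) ∧ (jacobianMatrix X xs 0).det < 0 ∧
      (∀ x y : ℝ, x ^ 2 + y ^ 2 ≤ R ^ 2 → (x, y) ≠ (r₀, 0) → X x y = (0, 0) →
        (x, y) = (xc, 0) ∨ (x, y) = (xs, 0)) := by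
  obtain ⟨B, hB⟩ : ∃ B, B = R ^ 2 / r₀ := ⟨_, rfl⟩
  have hBr : R ^ 2 = r₀ * B := by rw [hB]; field_simp
  have hRB : R < B := by
    rw [hB, lt_div_iff₀ hr₀]; nlinarith
  have hrB : r₀ < B := hrR.trans hRB
  have hB0 : 0 < B := hr₀.trans hrB
  rw [← hB] at hX
  have hcneg : c < 0 := by
    by_contra h
    have : 0 ≤ R ^ 2 / c := div_nonneg (by positivity) (by linarith)
    linarith
  obtain ⟨t, ht⟩ : ∃ t, t = ρ₀ ^ 2 := ⟨_, rfl⟩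
  have htB : r₀ = t * B := by
    rw [ht, hρ, hB]; field_simp
  have ht0 : 0 < t := by rw [ht, hρ]; positivity
  have ht1 : t < 1 := by nlinarith
  have hpos : 0 < 1 - t + t ^ 2 := by nlinarith [sq_nonneg (t - 1)]
  obtain ⟨s, hs⟩ : ∃ s, s = Real.sqrt (1 - t + t ^ 2) := ⟨_, rfl⟩
  have hs0 : 0 < s := by rw [hs]; exact Real.sqrt_pos.2 hpos
  have hs2 : s ^ 2 = 1 - t + t ^ 2 := by rw [hs]; exact Real.sq_sqrt hpos.le
  have hs3 : (1 - ρ₀ ^ 2 + ρ₀ ^ 4) ^ ((3 : ℝ) / 2) = s ^ 3 := by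
    have : 1 - ρ₀ ^ 2 + ρ₀ ^ 4 = s ^ 2 := by rw [hs2, ht]; ring
    rw [this, ← Real.rpow_natCast s 2, ← Real.rpow_mul hs0.le, ← Real.rpow_natCast s 3]
    norm_num
  have hD : Real.sqrt (R ^ 4 - R ^ 2 * r₀ ^ 2 + r₀ ^ 4) = r₀ * (B * s) := by
    rw [show R ^ 4 - R ^ 2 * r₀ ^ 2 + r₀ ^ 4 = (r₀ * (B * s)) ^ 2 by
      rw [show R ^ 4 = (R ^ 2) ^ 2 by ring, hBr, htB]; linear_combination (-(t ^ 2 * B ^ 4)) * hs2]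
    exact Real.sqrt_sq (by positivity)
  have hxM' : xM = (r₀ + B - B * s) / 3 := by
    rw [hxM, hD, hBr]; field_simp; ring
  have hf2 : 27 * (-c) * (1 - t) < -B ^ 2 * (2 - 3 * t - 3 * t ^ 2 + 2 * t ^ 3 - 2 * s ^ 3) := by
    have e : fval = (t / -c) * (-B ^ 2 * (2 - 3 * t - 3 * t ^ 2 + 2 * t ^ 3 - 2 * s ^ 3)
        - 27 * (-c) * (1 - t)) := by
      rw [hf, hs3, hφ, hBr, htB, show ρ₀ ^ 4 = t ^ 2 by rw [ht]; ring,
        show ρ₀ ^ 6 = t ^ 3 by rw [ht]; ring, ← ht]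
      have := hcneg.ne
      field_simp
      ring
    rw [e] at hfpos
    have := (mul_pos_iff_of_pos_left (div_pos ht0 (neg_pos.2 hcneg))).1 hfpos
    linarith
  have hmax : -c * (B - r₀) < xM * (r₀ - xM) * (B - xM) := by
    have e : xM * (r₀ - xM) * (B - xM) - -c * (B - r₀)
        = B / 27 * (-B ^ 2 * (2 - 3 * t - 3 * t ^ 2 + 2 * t ^ 3 - 2 * s ^ 3)
        - 27 * (-c) * (1 - t)) := by
      rw [hxM', htB]
      linear_combination (-B ^ 3 * s / 9) * hs2
    have : 0 < B / 27 * (-B ^ 2 * (2 - 3 * t - 3 * t ^ 2 + 2 * t ^ 3 - 2 * s ^ 3)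
        - 27 * (-c) * (1 - t)) := mul_pos (by positivity) (by linarith)
    linarith
  have hm : 0 < -c * (B - r₀) := mul_pos (by linarith) (by linarith)
  obtain ⟨xc, xs, h0, h1, h2, h3, hc1, hs1, hc2, hs4, huniq⟩ :=
    cubic_roots r₀ B (B * s) _ xM hr₀ hrB (by positivity)
      (by rw [mul_pow, hs2, htB]; ring) hxM' hm hmax
  have hcr : xc < r₀ := by linarith
  have hzero : ∀ x, x ≠ r₀ → x ≠ B →
      (X x 0 = (0, 0) ↔ x * (r₀ - x) * (B - x) = -c * (B - r₀)) := by
    intro x hx1 hx2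
    have a1 := sub_ne_zero.2 hx1
    have a2 := sub_ne_zero.2 hx2
    have e : (X x 0).2 = θ₀ / ((x - r₀) * (x - B)) *
        (x * (r₀ - x) * (B - x) - -c * (B - r₀)) := by
      rw [hX]; field_simp; ring
    have e1 : (X x 0).1 = 0 := by rw [hX]; simp
    have hne : θ₀ / ((x - r₀) * (x - B)) ≠ 0 := div_ne_zero hθ (mul_ne_zero a1 a2)
    rw [Prod.ext_iff]
    simp only [e, e1, true_and, mul_eq_zero, hne, false_or, sub_eq_zero]
  have hdet : ∀ x, x < r₀ → x * (r₀ - x) * (B - x) = -c * (B - r₀) →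
      ∃ K, 0 < K ∧ (jacobianMatrix X x 0).det
        = K * (3 * x ^ 2 - 2 * (r₀ + B) * x + r₀ * B) := by
    intro x hx hxm
    have p1 : 0 < r₀ - x := by linarith
    have p2 : 0 < B - x := by linarith
    have hQ : 0 ≤ 1 / (x - r₀) ^ 2 - 1 / (x - B) ^ 2 := by
      have : 1 / (x - B) ^ 2 ≤ 1 / (x - r₀) ^ 2 := by
        apply one_div_le_one_div_of_le
        · rw [show (x - r₀) ^ 2 = (r₀ - x) ^ 2 by ring]; positivity
        · rw [show (x - r₀) ^ 2 = (r₀ - x) ^ 2 by ring, show (x - B) ^ 2 = (B - x) ^ 2 by ring]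
          exact pow_le_pow_left₀ p1.le (by linarith) 2
      linarith
    have hL : 0 < 1 - c * (1 / (x - r₀) ^ 2 - 1 / (x - B) ^ 2) := by
      have := mul_nonneg (neg_pos.2 hcneg).le hQ
      linarith
    refine ⟨θ₀ ^ 2 * (1 - c * (1 / (x - r₀) ^ 2 - 1 / (x - B) ^ 2)) / ((r₀ - x) * (B - x)),
      by positivity, ?_⟩
    rw [det_axis r₀ B θ₀ c x (by linarith) (by linarith) X hX, det_factor r₀ B c x hrB hx hxm]
    ring
  refine ⟨xc, xs, h0, h1, h2, h3, (hzero xc hcr.ne (by linarith)).2 hc1, ?_,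
    (hzero xs h3.ne (by linarith)).2 hs1, ?_, ?_⟩
  · obtain ⟨K, hK, e⟩ := hdet xc hcr hc1
    rw [e]; exact mul_pos hK hc2
  · obtain ⟨K, hK, e⟩ := hdet xs h3 hs1
    rw [e]; exact mul_neg_of_pos_of_neg hK hs4
  · intro x y hxy hne hx0
    have hxR : x ≤ R := abs_le_of_sq_le_sq' (by linarith [sq_nonneg y]) hR.le |>.2
    by_cases hy : y = 0
    · subst hy
      have hxr : x ≠ r₀ := by rintro rfl; exact hne rfl
      rcases huniq x (by linarith) ((hzero x hxr (by linarith)).1 hx0) with h | h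
      · left; rw [h]
      · right; rw [h]
    · exfalso
      have hy2 : 0 < y ^ 2 := by positivity
      have hA : 0 < (x - r₀) ^ 2 + y ^ 2 := by positivity
      have hle : (x - r₀) ^ 2 + y ^ 2 ≤ (x - B) ^ 2 + y ^ 2 := by
        have : 2 * R ≤ r₀ + B := by
          have h9 : 0 ≤ r₀ * (r₀ + B - 2 * R) := by
            have := sq_nonneg (R - r₀)
            linarith
          have := (mul_nonneg_iff_of_pos_left hr₀).1 h9
          linarith
        have h7 : 0 ≤ (B - r₀) * (r₀ + B - 2 * x) := mul_nonneg (by linarith) (by linarith)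
        linarith
      have hQ := one_div_le_one_div_of_le hA hle
      have e := congrArg Prod.fst hx0
      rw [hX] at e
      simp only at e
      have e2 : θ₀ * y * (-1 + c * (1 / ((x - r₀) ^ 2 + y ^ 2) - 1 / ((x - B) ^ 2 + y ^ 2))) = 0 := by
        linear_combination e
      rcases mul_eq_zero.1 e2 with h | h
      · exact (mul_ne_zero hθ hy) h
      · have h8 := mul_nonneg (neg_pos.2 hcneg).le (sub_nonneg.2 hQ)
        linarith
end

section
/- Assume φ₀ > 0 and ρ₀ = (1 − φ₀)/(1 + φ₀). Then the unique critical point of X in the closed disk D_R is the boundary point (−R, 0), and the determinant of the Jacobian matrix of X at (−R, 0) is zero, i.e. (−R, 0) is a degenerate singular point. (Case (f) of Theorem 1.) -/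
/-- case (f) of Theorem 1: for `φ₀ > 0` and `ρ₀ = (1 − φ₀)/(1 + φ₀)` the
unique critical point of `X` in `D_R` is the boundary point `(−R, 0)`, which is
degenerate: the Jacobian determinant there vanishes. -/
theorem case_f_degenerate_saddle
    (R r₀ θ₀ Γ : ℝ)
    (hR : 0 < R) (hr₀ : 0 < r₀) (hrR : r₀ < R) (hθ : θ₀ ≠ 0) (hΓ : Γ ≠ 0)
    (c ρ₀ φ₀ : ℝ) (hc : c = Γ / (2 * Real.pi * θ₀))
    (hρ : ρ₀ = r₀ / R) (hφ : φ₀ = R ^ 2 / c) (hφpos : 0 < φ₀)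
    (hcurve : ρ₀ = (1 - φ₀) / (1 + φ₀))
    (X : ℝ → ℝ → ℝ × ℝ)
    (hX : ∀ x y : ℝ, X x y =
      (-θ₀ * y + c * θ₀ * y *
          (1 / ((x - r₀) ^ 2 + y ^ 2) - 1 / ((x - R ^ 2 / r₀) ^ 2 + y ^ 2)),
       θ₀ * x - c * θ₀ *
          ((x - r₀) / ((x - r₀) ^ 2 + y ^ 2) -
            (x - R ^ 2 / r₀) / ((x - R ^ 2 / r₀) ^ 2 + y ^ 2)))) :
    X (-R) 0 = (0, 0) ∧
    (jacobianMatrix X (-R) 0).det = 0 ∧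
    (∀ x y : ℝ, x ^ 2 + y ^ 2 ≤ R ^ 2 → (x, y) ≠ (r₀, 0) → X x y = (0, 0) →
      (x, y) = (-R, 0)) := by
  have hc0 : c ≠ 0 := by
    rintro rfl
    simp at hφ
    linarith
  have hcR : c * (R - r₀) = R ^ 2 * (R + r₀) := by
    have h1 : 1 + φ₀ ≠ 0 := by positivity
    have h2 : φ₀ * c = R ^ 2 := by rw [hφ]; field_simp
    rw [hρ, div_eq_div_iff hR.ne' h1] at hcurve
    linear_combination (-c) * hcurve + (R + r₀) * h2
  obtain ⟨B, hBdef⟩ : ∃ B, B = R ^ 2 / r₀ := ⟨_, rfl⟩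
  have hB : B * r₀ = R ^ 2 := by rw [hBdef]; field_simp
  have hBR : R < B := by
    rw [hBdef, lt_div_iff₀ hr₀]; nlinarith
  rw [← hBdef] at hX
  have hRr : 0 < R - r₀ := by linarith
  have hceq : c = R ^ 2 * (R + r₀) / (R - r₀) := by
    rw [eq_div_iff hRr.ne', hcR]
  have hn1 : -R - r₀ ≠ 0 := by linarith
  have hn2 : -R - B ≠ 0 := by linarith
  have hn3 : R + r₀ ≠ 0 := by linarith
  have hBe : -R - B = -(R * (R + r₀) / r₀) := by rw [hBdef]; field_simp; ring
  have hre : -R - r₀ = -(R + r₀) := by ring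
  refine ⟨?_, ?_, ?_⟩
  · rw [hX]
    ext
    · simp
    · simp only [hBe, hre, hceq]
      field_simp
      ring
  · have hxx : deriv (fun s => (X s 0).1) (-R) = 0 := by
      have : (fun s => (X s 0).1) = fun _ => (0:ℝ) := by
        funext s; rw [hX]; simp
      rw [this]; simp
    have hxy : deriv (fun s => (X (-R) s).1) 0 = 0 := by
      have hfun : (fun s => (X (-R) s).1) = fun s => s * (-θ₀ + c * θ₀ *
          (1 / ((-R - r₀) ^ 2 + s ^ 2) - 1 / ((-R - B) ^ 2 + s ^ 2))) := by
        funext s; rw [hX]; ring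
      have hd : DifferentiableAt ℝ (fun s : ℝ => (-θ₀ + c * θ₀ *
          (1 / ((-R - r₀) ^ 2 + s ^ 2) - 1 / ((-R - B) ^ 2 + s ^ 2)))) 0 := by
        have h1 : (-R - r₀) ^ 2 + (0:ℝ) ^ 2 ≠ 0 := by positivity
        have h2 : (-R - B) ^ 2 + (0:ℝ) ^ 2 ≠ 0 := by positivity
        fun_prop (disch := assumption)
      have := (hasDerivAt_id (0:ℝ)).mul hd.hasDerivAt
      rw [hfun]
      refine HasDerivAt.deriv (this.congr_deriv ?_)
      simp only [hBe, hre, hceq, id]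
      field_simp
      ring
    simp [jacobianMatrix, Matrix.det_fin_two, hxx, hxy]
  · intro x y hD hne h0
    rw [hX, Prod.mk.injEq] at h0
    obtain ⟨e1, e2⟩ := h0
    have hxR : x ≤ R := by nlinarith [sq_nonneg y]
    have hd2 : (x - B) ^ 2 + y ^ 2 ≠ 0 := by
      have : 0 < (B - x) := by linarith
      have : 0 < (x - B) ^ 2 := by nlinarith
      positivity
    by_cases hy : y = 0
    · subst hy
      have hxr : x - r₀ ≠ 0 := fun h => hne (by rw [sub_eq_zero.mp h])
      have hxB : x - B ≠ 0 := by linarith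
      have e3 : x * ((x - r₀) * (x - B)) = c * (r₀ - B) := by
        have : θ₀ * (x * ((x - r₀) * (x - B))) = θ₀ * (c * (r₀ - B)) := by
          have h' : (θ₀ * x - c * θ₀ * ((x - r₀) / ((x - r₀) ^ 2 + 0 ^ 2) -
              (x - B) / ((x - B) ^ 2 + 0 ^ 2))) * ((x - r₀) * (x - B))
              = θ₀ * (x * ((x - r₀) * (x - B))) - θ₀ * (c * (r₀ - B)) := by
            simp only [ne_eq, OfNat.ofNat_ne_zero, not_false_eq_true, zero_pow, add_zero]
            field_simp
            ring
          rw [e2] at h'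
          linear_combination -h'
        exact mul_left_cancel₀ hθ this
      have e4 : (R - r₀) * ((x + R) * (r₀ * x ^ 2 - (r₀ ^ 2 + R ^ 2 + R * r₀) * x
          + R * (R + r₀) ^ 2)) = 0 := by
        linear_combination (R - r₀) * r₀ * e3 + (r₀ * r₀ - R ^ 2) * hcR + (x * (x - r₀) * (R - r₀) - c * (R - r₀)) * hB
      have hq : 0 < r₀ * x ^ 2 - (r₀ ^ 2 + R ^ 2 + R * r₀) * x + R * (R + r₀) ^ 2 := by
        have h1 : 0 ≤ r₀ ^ 2 + R ^ 2 + R * r₀ - r₀ * (x + R) := by nlinarith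
        have h2 : 0 ≤ (R - x) * (r₀ ^ 2 + R ^ 2 + R * r₀ - r₀ * (x + R)) :=
          mul_nonneg (by linarith) h1
        have h3 : 0 < R ^ 2 * r₀ := by positivity
        nlinarith
      have : x + R = 0 := by
        rcases mul_eq_zero.mp e4 with h | h
        · linarith
        · rcases mul_eq_zero.mp h with h | h
          · exact h
          · linarith
      rw [eq_neg_of_add_eq_zero_left this]
    · exfalso
      have hyy : 0 < y ^ 2 := by positivity
      have hd1 : (x - r₀) ^ 2 + y ^ 2 ≠ 0 := by positivity
      obtain ⟨d1, hd1e⟩ : ∃ d, d = (x - r₀) ^ 2 + y ^ 2 := ⟨_, rfl⟩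
      obtain ⟨d2, hd2e⟩ : ∃ d, d = (x - B) ^ 2 + y ^ 2 := ⟨_, rfl⟩
      rw [← hd1e] at e1 e2 hd1
      rw [← hd2e] at e1 e2 hd2
      have f1 : d1 * d2 = c * (d2 - d1) := by
        have : (θ₀ * y) * (d1 * d2) = (θ₀ * y) * (c * (d2 - d1)) := by
          have h : (-θ₀ * y + c * θ₀ * y * (1 / d1 - 1 / d2)) * (d1 * d2) = 0 := by
            rw [e1, zero_mul]
          have h' : (-θ₀ * y + c * θ₀ * y * (1 / d1 - 1 / d2)) * (d1 * d2)
            = -θ₀ * y * (d1 * d2) + c * θ₀ * y * (d2 - d1) := by field_simp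
          linear_combination h' - h
        exact mul_left_cancel₀ (mul_ne_zero hθ hy) this
      have f2 : x * (d1 * d2) = c * ((x - r₀) * d2 - (x - B) * d1) := by
        have : θ₀ * (x * (d1 * d2)) = θ₀ * (c * ((x - r₀) * d2 - (x - B) * d1)) := by
          have h : (θ₀ * x - c * θ₀ * ((x - r₀) / d1 - (x - B) / d2)) * (d1 * d2) = 0 := by
            rw [e2, zero_mul]
          have h' : (θ₀ * x - c * θ₀ * ((x - r₀) / d1 - (x - B) / d2)) * (d1 * d2)
            = θ₀ * x * (d1 * d2) - c * θ₀ * ((x - r₀) * d2 - (x - B) * d1) := by field_simp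
          linear_combination h - h'
        exact mul_left_cancel₀ hθ this
      have f3 : r₀ * d2 = B * d1 := by
        have : c * (r₀ * d2) = c * (B * d1) := by linear_combination f2 - x * f1
        exact mul_left_cancel₀ hc0 this
      have f4 : x ^ 2 + y ^ 2 = R ^ 2 := by
        have : (B - r₀) * (x ^ 2 + y ^ 2) = (B - r₀) * R ^ 2 := by
          rw [hd1e, hd2e] at f3
          linear_combination (B - r₀) * hB - f3
        exact mul_left_cancel₀ (by linarith) this
      have f5 : B * d1 = c * (B - r₀) := by
        have : d1 * (B * d1) = d1 * (c * (B - r₀)) := by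
          linear_combination r₀ * f1 + (c - d1) * f3
        exact mul_left_cancel₀ hd1 this
      have f6 : R ^ 2 * d1 = R ^ 2 * (R + r₀) ^ 2 := by
        linear_combination r₀ * f5 + (R + r₀) * hcR + (c - d1) * hB
      have f7 : d1 = (R + r₀) ^ 2 := mul_left_cancel₀ (by positivity) f6
      have f8 : x = -R := by
        have : r₀ * x = r₀ * (-R) := by
          linear_combination (-1/2) * f7 + (1/2) * hd1e + (1/2) * f4
        exact mul_left_cancel₀ hr₀.ne' this
      rw [f8] at f4
      have f9 : y ^ 2 = 0 := by linear_combination f4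
      exact hyy.ne' f9
end

section
/- Assume φ₀ > 0 and ρ₀ = (φ₀ − 1)/(1 + φ₀). Then the set of critical points of X in the closed disk D_R consists of exactly two points: a point (x_c, 0) with x_c ∈ (−R, 0) at which det DX > 0 (a center), and the boundary point (R, 0) at which det DX = 0 (a degenerate singular point). (Case (g) of Theorem 1.) -/
theorem det_axis_aux (r B θ c x : ℝ) (X : ℝ → ℝ → ℝ × ℝ)
    (hX : ∀ x y : ℝ, X x y =
      (-θ * y + c * θ * y * (1 / ((x - r) ^ 2 + y ^ 2) - 1 / ((x - B) ^ 2 + y ^ 2)),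
       θ * x - c * θ * ((x - r) / ((x - r) ^ 2 + y ^ 2) - (x - B) / ((x - B) ^ 2 + y ^ 2))))
    (h1 : x - r ≠ 0) (h2 : x - B ≠ 0) :
    (jacobianMatrix X x 0).det
      = θ ^ 2 * (1 - (c * (1 / (x - r) ^ 2 - 1 / (x - B) ^ 2)) ^ 2) := by
  have e1 : deriv (fun s => (X s 0).1) x = 0 := by
    have : (fun s => (X s 0).1) = fun _ => (0 : ℝ) := by
      funext s; rw [hX]; simp
    rw [this]; simp
  have hd : ∀ a : ℝ, a ≠ 0 → HasDerivAt (fun s : ℝ => 1 / (a ^ 2 + s ^ 2)) 0 0 := by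
    intro a ha
    have h := ((hasDerivAt_pow 2 (0 : ℝ)).const_add (a ^ 2)).inv (by simpa using ha)
    rw [show (fun s : ℝ => 1 / (a ^ 2 + s ^ 2)) = fun s => (a ^ 2 + s ^ 2)⁻¹ from by funext s; rw [one_div]]
    exact h.congr_deriv (by simp)
  have e2 : deriv (fun s => (X x s).1) 0
      = -θ + c * θ * (1 / (x - r) ^ 2 - 1 / (x - B) ^ 2) := by
    have : (fun s => (X x s).1) = fun s => -θ * s + c * θ * s *
        (1 / ((x - r) ^ 2 + s ^ 2) - 1 / ((x - B) ^ 2 + s ^ 2)) := by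
      funext s; rw [hX]
    rw [this]
    have h := ((hasDerivAt_id (0 : ℝ)).const_mul (-θ)).add
      (((hasDerivAt_id (0 : ℝ)).const_mul (c * θ)).mul ((hd _ h1).sub (hd _ h2)))
    refine HasDerivAt.deriv (h.congr_deriv ?_)
    simp
  have hq : ∀ a : ℝ, x - a ≠ 0 →
      HasDerivAt (fun s : ℝ => (s - a) / ((s - a) ^ 2 + 0 ^ 2)) (-1 / (x - a) ^ 2) x := by
    intro a ha
    have h0 := (hasDerivAt_id x).sub_const a
    have h := h0.inv ha
    have : (fun s : ℝ => (s - a) / ((s - a) ^ 2 + 0 ^ 2)) = fun s => (s - a)⁻¹ := by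
      funext s
      by_cases hs : s - a = 0
      · simp [hs]
      · field_simp
        simp
    rw [this]
    exact h
  have e3 : deriv (fun s => (X s 0).2) x
      = θ + c * θ * (1 / (x - r) ^ 2 - 1 / (x - B) ^ 2) := by
    have : (fun s => (X s 0).2) = fun s => θ * s - c * θ *
        ((s - r) / ((s - r) ^ 2 + 0 ^ 2) - (s - B) / ((s - B) ^ 2 + 0 ^ 2)) := by
      funext s; rw [hX]
    rw [this]
    have h := ((hasDerivAt_id x).const_mul θ).sub
      (((hq _ h1).sub (hq _ h2)).const_mul (c * θ))
    refine HasDerivAt.deriv (h.congr_deriv ?_)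
    ring
  rw [jacobianMatrix, Matrix.det_fin_two_of, e1, e2, e3]
  ring

/-- case (g) of Theorem 1: for `φ₀ > 0` and `ρ₀ = (φ₀ − 1)/(1 + φ₀)` the
critical points of `X` in `D_R` are exactly a center `(x_c, 0)` with `x_c ∈ (−R, 0)`
and the degenerate boundary point `(R, 0)`. -/
theorem case_g_center_and_degenerate_saddle
    (R r₀ θ₀ Γ : ℝ)
    (hR : 0 < R) (hr₀ : 0 < r₀) (hrR : r₀ < R) (hθ : θ₀ ≠ 0) (hΓ : Γ ≠ 0)
    (c ρ₀ φ₀ : ℝ) (hc : c = Γ / (2 * Real.pi * θ₀))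
    (hρ : ρ₀ = r₀ / R) (hφ : φ₀ = R ^ 2 / c) (hφpos : 0 < φ₀)
    (hcurve : ρ₀ = (φ₀ - 1) / (1 + φ₀))
    (X : ℝ → ℝ → ℝ × ℝ)
    (hX : ∀ x y : ℝ, X x y =
      (-θ₀ * y + c * θ₀ * y *
          (1 / ((x - r₀) ^ 2 + y ^ 2) - 1 / ((x - R ^ 2 / r₀) ^ 2 + y ^ 2)),
       θ₀ * x - c * θ₀ *
          ((x - r₀) / ((x - r₀) ^ 2 + y ^ 2) -
            (x - R ^ 2 / r₀) / ((x - R ^ 2 / r₀) ^ 2 + y ^ 2)))) :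
    ∃ xc : ℝ,
      (-R < xc ∧ xc < 0) ∧ X xc 0 = (0, 0) ∧ 0 < (jacobianMatrix X xc 0).det ∧
      X R 0 = (0, 0) ∧ (jacobianMatrix X R 0).det = 0 ∧
      (∀ x y : ℝ, x ^ 2 + y ^ 2 ≤ R ^ 2 → (x, y) ≠ (r₀, 0) → X x y = (0, 0) →
        (x, y) = (xc, 0) ∨ (x, y) = (R, 0)) := by
  obtain ⟨B, hB⟩ : ∃ B, B = R ^ 2 / r₀ := ⟨_, rfl⟩
  rw [← hB] at hX
  have hrB : r₀ * B = R ^ 2 := by rw [hB]; field_simp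
  have hBR : R < B := by nlinarith
  have hc0 : 0 < c := by
    by_contra h
    have : R ^ 2 / c ≤ 0 := div_nonpos_of_nonneg_of_nonpos (by positivity) (not_lt.mp h)
    linarith
  have hcr : c * (R + r₀) = R ^ 2 * (R - r₀) := by
    rw [hρ, div_eq_div_iff hR.ne' (by positivity)] at hcurve
    have h2 : φ₀ * c = R ^ 2 := by rw [hφ]; field_simp
    linear_combination c * hcurve + (R - r₀) * h2
  -- axis equation
  have haxis : ∀ x, x - r₀ ≠ 0 → x - B ≠ 0 → (X x 0 = (0, 0) ↔
      (x - R) * (r₀ * x ^ 2 - (R ^ 2 + r₀ ^ 2 - r₀ * R) * x - R * (R - r₀) ^ 2) = 0) := by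
    intro x h1 h2
    have key : (x * (x - r₀) * (x - B) - c * (r₀ - B)) * r₀ = 
        (x - R) * (r₀ * x ^ 2 - (R ^ 2 + r₀ ^ 2 - r₀ * R) * x - R * (R - r₀) ^ 2) := by
      linear_combination (-x * (x - r₀) + c) * hrB + (R - r₀) * hcr
    rw [← key, hX]
    have : θ₀ * x - c * θ₀ * ((x - r₀) / ((x - r₀) ^ 2 + 0 ^ 2) - (x - B) / ((x - B) ^ 2 + 0 ^ 2))
        = θ₀ * (x * (x - r₀) * (x - B) - c * (r₀ - B)) / ((x - r₀) * (x - B)) := by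
      have g : ∀ a : ℝ, a ≠ 0 → a / (a ^ 2 + 0 ^ 2) = 1 / a := by
        intro a ha
        field_simp
        simp
      rw [g _ h1, g _ h2]
      field_simp
      ring
    rw [this]
    simp [hθ, h1, h2, hr₀.ne']
  obtain ⟨xc, ⟨hx1, hx2⟩, hq⟩ : ∃ xc, (-R < xc ∧ xc < 0) ∧
      r₀ * xc ^ 2 - (R ^ 2 + r₀ ^ 2 - r₀ * R) * xc - R * (R - r₀) ^ 2 = 0 := by
    have hcont : ContinuousOn
        (fun x : ℝ => r₀ * x ^ 2 - (R ^ 2 + r₀ ^ 2 - r₀ * R) * x - R * (R - r₀) ^ 2)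
        (Set.Icc (-R) 0) := by fun_prop
    have hsub := intermediate_value_Ioo' (by linarith : -R ≤ 0) hcont
    have hmem : (0 : ℝ) ∈ Set.Ioo
        (r₀ * 0 ^ 2 - (R ^ 2 + r₀ ^ 2 - r₀ * R) * 0 - R * (R - r₀) ^ 2)
        (r₀ * (-R) ^ 2 - (R ^ 2 + r₀ ^ 2 - r₀ * R) * (-R) - R * (R - r₀) ^ 2) := by
      have p1 : 0 < R * (R - r₀) ^ 2 := mul_pos hR (pow_pos (by linarith) 2)
      have p2 : 0 < R ^ 2 * r₀ := by positivity
      constructor <;> nlinarith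
    obtain ⟨z, hz, hz'⟩ := hsub hmem
    exact ⟨z, ⟨hz.1, hz.2⟩, hz'⟩
  have n1 : xc - r₀ ≠ 0 := by linarith
  have n2 : xc - B ≠ 0 := by linarith
  have n3 : R - r₀ ≠ 0 := by linarith
  have n4 : R - B ≠ 0 := by linarith
  have hXc : X xc 0 = (0, 0) := (haxis xc n1 n2).2 (by rw [hq]; simp)
  refine ⟨xc, ⟨hx1, hx2⟩, hXc, ?_, (haxis R n3 n4).2 (by simp), ?_, ?_⟩
  · rw [det_axis_aux r₀ B θ₀ c xc X hX n1 n2]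
    have hk : xc * (xc - r₀) * (xc - B) = c * (r₀ - B) := by
      have : (xc * (xc - r₀) * (xc - B) - c * (r₀ - B)) * r₀ = 0 := by
        linear_combination (-xc * (xc - r₀) + c) * hrB + (R - r₀) * hcr + (xc - R) * hq
      have := (mul_eq_zero.mp this).resolve_right hr₀.ne'
      linarith
    have hS : c * (1 / (xc - r₀) ^ 2 - 1 / (xc - B) ^ 2)
        = (-xc) * (r₀ + B - 2 * xc) / ((r₀ - xc) * (B - xc)) := by
      have m1 : r₀ - xc ≠ 0 := by linarith
      have m2 : B - xc ≠ 0 := by linarith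
      rw [← neg_sub r₀ xc, ← neg_sub B xc, neg_sq, neg_sq]
      field_simp
      linear_combination (B + r₀ - 2 * xc) * hk
    have hden : 0 < (r₀ - xc) * (B - xc) := mul_pos (by linarith) (by linarith)
    rw [hS]
    have l1 : (-xc) * (r₀ + B - 2 * xc) / ((r₀ - xc) * (B - xc)) < 1 := by
      rw [div_lt_one hden]
      nlinarith
    have l0 : 0 ≤ (-xc) * (r₀ + B - 2 * xc) / ((r₀ - xc) * (B - xc)) :=
      div_nonneg (mul_nonneg (by linarith) (by linarith)) hden.le
    have : 0 < θ₀ ^ 2 := by positivity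
    apply mul_pos this
    nlinarith
  · rw [det_axis_aux r₀ B θ₀ c R X hX n3 n4]
    have hS : c * (1 / (R - r₀) ^ 2 - 1 / (R - B) ^ 2) = 1 := by
      have hcc : c = R ^ 2 * (R - r₀) / (R + r₀) := by
        rw [eq_div_iff (by linarith)]; exact hcr
      have hb : R - B = -(R * (R - r₀) / r₀) := by rw [hB]; field_simp; ring
      rw [hb, hcc]
      have : R + r₀ ≠ 0 := by linarith
      field_simp
      ring
    rw [hS]; ring
  · intro x y hxy hne h0
    have hxR : x ≤ R := by nlinarith [sq_nonneg y]
    have hxR' : -R ≤ x := by nlinarith [sq_nonneg y]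
    by_cases hy : y = 0
    · subst hy
      have k1 : x - r₀ ≠ 0 := by
        intro h; apply hne; rw [sub_eq_zero.mp h]
      have k2 : x - B ≠ 0 := by linarith
      rcases mul_eq_zero.mp ((haxis x k1 k2).1 h0) with h | h
      · right; rw [sub_eq_zero.mp h]
      · left
        have hf : (x - xc) * (r₀ * (x + xc) - (R ^ 2 + r₀ ^ 2 - r₀ * R)) = 0 := by
          linear_combination h - hq
        rcases mul_eq_zero.mp hf with h | h
        · rw [sub_eq_zero.mp h]
        · exfalso
          nlinarith [mul_pos hr₀ (neg_pos.mpr hx2), mul_nonneg hr₀.le (sub_nonneg.mpr hxR),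
            mul_self_pos.mpr n3]
    · exfalso
      have hy2 : 0 < y ^ 2 := by positivity
      rw [hX, Prod.mk.injEq] at h0
      obtain ⟨f1, f2⟩ := h0
      have hP : 0 < (x - r₀) ^ 2 + y ^ 2 := by positivity
      have hQ : 0 < (x - B) ^ 2 + y ^ 2 := by positivity
      obtain ⟨P, hPe⟩ : ∃ P, P = (x - r₀) ^ 2 + y ^ 2 := ⟨_, rfl⟩
      obtain ⟨Q, hQe⟩ : ∃ Q, Q = (x - B) ^ 2 + y ^ 2 := ⟨_, rfl⟩
      rw [← hPe] at hP f1 f2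
      rw [← hQe] at hQ f1 f2
      have g1 : c * (Q - P) = P * Q := by
        field_simp at f1
        have : (θ₀ * y) * (c * (Q - P) - P * Q) = 0 := by
          first
          | linear_combination f1
          | linear_combination (θ₀ * y) * f1
          | linear_combination (θ₀) * f1
          | linear_combination (y) * f1
        have := (mul_eq_zero.mp this).resolve_left (mul_ne_zero hθ hy)
        linarith
      have g2 : x * (P * Q) = c * ((x - r₀) * Q - (x - B) * P) := by
        field_simp at f2
        have : θ₀ * (x * (P * Q) - c * ((x - r₀) * Q - (x - B) * P)) = 0 := by
          first
          | linear_combination f2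
          | linear_combination (θ₀) * f2
        have := (mul_eq_zero.mp this).resolve_left hθ
        linarith
      have g3 : r₀ * Q = B * P := by
        have : c * (r₀ * Q - B * P) = 0 := by linear_combination g2 + x * g1
        have := (mul_eq_zero.mp this).resolve_left hc0.ne'
        linarith
      have g4 : x ^ 2 + y ^ 2 = R ^ 2 := by
        have : (B - r₀) * (x ^ 2 + y ^ 2 - R ^ 2) = 0 := by
          rw [hPe, hQe] at g3
          linear_combination -g3 + (B - r₀) * hrB
        have := (mul_eq_zero.mp this).resolve_left (by linarith)
        linarith
      have g5 : c * (B - r₀) = B * P := by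
        have : P * (c * (B - r₀) - B * P) = 0 := by
          linear_combination r₀ * g1 + (P - c) * g3
        have := (mul_eq_zero.mp this).resolve_left hP.ne'
        linarith
      have g6 : P = (R - r₀) ^ 2 := by
        have : R ^ 2 * (P - (R - r₀) ^ 2) = 0 := by
          linear_combination (-r₀) * g5 + (c - P) * hrB + (R - r₀) * hcr
        have := (mul_eq_zero.mp this).resolve_left (by positivity)
        linarith
      have g7 : x = R := by
        have : r₀ * (x - R) = 0 := by
          linear_combination (1 / 2) * (g4 - g6 + hPe)
        have := (mul_eq_zero.mp this).resolve_left hr₀.ne'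
        linarith
      rw [g7] at g4
      linarith
end

section
/- Assume φ₀ < 0 and f(ρ₀, φ₀) = 0. Then the unique critical point of X in the closed disk D_R is the point (x_p*, 0) with x_p* = (R² + r₀² − √(R⁴ − R²r₀² + r₀⁴))/(3r₀), and at this point the Jacobian matrix of X is nonzero and nilpotent (its determinant and trace both vanish but the matrix itself is not zero), i.e. (x_p*, 0) is a cusp-type degenerate singular point. (Case (h) of Theorem 1.) -/
set_option maxHeartbeats 1600000 in
/-- case (h) of Theorem 1: for `φ₀ < 0` and `f(ρ₀, φ₀) = 0` the unique
critical point of `X` in `D_R` is the cusp `(x_p*, 0)`, at which the Jacobian matrix is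
nonzero and nilpotent (its determinant and trace both vanish). -/
theorem case_h_cusp
    (R r₀ θ₀ Γ : ℝ)
    (hR : 0 < R) (hr₀ : 0 < r₀) (hrR : r₀ < R) (hθ : θ₀ ≠ 0) (hΓ : Γ ≠ 0)
    (c ρ₀ φ₀ : ℝ) (hc : c = Γ / (2 * Real.pi * θ₀))
    (hρ : ρ₀ = r₀ / R) (hφ : φ₀ = R ^ 2 / c) (hφneg : φ₀ < 0)
    (fval : ℝ)
    (hf : fval = 27 * ρ₀ ^ 2 * (ρ₀ ^ 2 - 1) +
      φ₀ * (2 - 3 * ρ₀ ^ 2 - 3 * ρ₀ ^ 4 + 2 * ρ₀ ^ 6 -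
        2 * (1 - ρ₀ ^ 2 + ρ₀ ^ 4) ^ ((3 : ℝ) / 2)))
    (hfzero : fval = 0)
    (xp : ℝ)
    (hxp : xp = (R ^ 2 + r₀ ^ 2 - Real.sqrt (R ^ 4 - R ^ 2 * r₀ ^ 2 + r₀ ^ 4)) / (3 * r₀))
    (X : ℝ → ℝ → ℝ × ℝ)
    (hX : ∀ x y : ℝ, X x y =
      (-θ₀ * y + c * θ₀ * y *
          (1 / ((x - r₀) ^ 2 + y ^ 2) - 1 / ((x - R ^ 2 / r₀) ^ 2 + y ^ 2)),
       θ₀ * x - c * θ₀ *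
          ((x - r₀) / ((x - r₀) ^ 2 + y ^ 2) -
            (x - R ^ 2 / r₀) / ((x - R ^ 2 / r₀) ^ 2 + y ^ 2)))) :
    X xp 0 = (0, 0) ∧
    (∀ x y : ℝ, x ^ 2 + y ^ 2 ≤ R ^ 2 → (x, y) ≠ (r₀, 0) → X x y = (0, 0) →
      (x, y) = (xp, 0)) ∧
    jacobianMatrix X xp 0 ≠ 0 ∧
    IsNilpotent (jacobianMatrix X xp 0) ∧
    (jacobianMatrix X xp 0).det = 0 ∧
    (jacobianMatrix X xp 0).trace = 0 := by
  have hr : r₀ ≠ 0 := hr₀.ne'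
  have hRn : R ≠ 0 := hR.ne'
  have hcneg : c < 0 := by
    by_contra h
    push Not at h
    have : 0 ≤ R ^ 2 / c := by positivity
    linarith
  have hcn : c ≠ 0 := hcneg.ne
  have hsq : r₀ ^ 2 < R ^ 2 := by nlinarith
  set D := Real.sqrt (R ^ 4 - R ^ 2 * r₀ ^ 2 + r₀ ^ 4) with hD
  have hDarg : 0 < R ^ 4 - R ^ 2 * r₀ ^ 2 + r₀ ^ 4 := by
    nlinarith [mul_pos (pow_pos hR 2) (sub_pos.2 hsq), pow_pos hr₀ 4]
  have hDpos : 0 < D := Real.sqrt_pos.2 hDarg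
  have hD2 : D ^ 2 = R ^ 4 - R ^ 2 * r₀ ^ 2 + r₀ ^ 4 := Real.sq_sqrt hDarg.le
  have hpow : (1 - ρ₀ ^ 2 + ρ₀ ^ 4) ^ ((3 : ℝ) / 2) = (D / R ^ 2) ^ 3 := by
    have h1 : 1 - ρ₀ ^ 2 + ρ₀ ^ 4 = (D / R ^ 2) ^ (2 : ℝ) := by
      rw [Real.rpow_two, div_pow, hD2, hρ]; field_simp
    rw [h1, ← Real.rpow_mul (by positivity)]
    norm_num
  have hkey : 27 * c * r₀ ^ 2 * (r₀ ^ 2 - R ^ 2) =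
      -(2 * R ^ 6 - 3 * r₀ ^ 2 * R ^ 4 - 3 * r₀ ^ 4 * R ^ 2 + 2 * r₀ ^ 6 - 2 * D ^ 3) := by
    rw [hpow, hfzero, hρ, hφ] at hf
    field_simp at hf
    linarith
  obtain ⟨B, hB⟩ : ∃ B, B = R ^ 2 / r₀ := ⟨_, rfl⟩
  rw [← hB] at hX
  have hrB : r₀ * B = R ^ 2 := by rw [hB]; field_simp
  have hBR : R < B := by
    rw [hB, lt_div_iff₀ hr₀]; nlinarith
  have hsum : 2 * R < r₀ + B := by
    have : 0 < r₀ * (r₀ + B - 2 * R) := by nlinarith [sq_pos_of_pos (sub_pos.2 hrR)]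
    have := pos_of_mul_pos_right this hr₀.le
    linarith
  obtain ⟨d, hd⟩ : ∃ d, d = D / r₀ := ⟨_, rfl⟩
  have hdD : D = r₀ * d := by rw [hd]; field_simp
  have hdpos : 0 < d := by rw [hd]; positivity
  have hd2 : d ^ 2 = (r₀ + B) ^ 2 - 3 * R ^ 2 := by
    have : r₀ ^ 2 * d ^ 2 = r₀ ^ 2 * ((r₀ + B) ^ 2 - 3 * R ^ 2) := by
      have h := hD2
      have e4 : R ^ 4 = (R ^ 2) ^ 2 := by ring
      rw [e4, hdD, ← hrB] at h
      rw [← hrB]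
      linear_combination h
    exact mul_left_cancel₀ (by positivity) this
  have hdR : R < d := by nlinarith
  have hxp3 : 3 * xp = r₀ + B - d := by
    rw [hxp, hd, hB]; field_simp; ring
  have hk : 27 * (c * (r₀ - B)) = -(2 * (r₀ + B) ^ 3 - 9 * (r₀ + B) * R ^ 2 - 2 * d ^ 3) := by
    have : r₀ ^ 3 * (27 * (c * (r₀ - B))) =
        r₀ ^ 3 * -(2 * (r₀ + B) ^ 3 - 9 * (r₀ + B) * R ^ 2 - 2 * d ^ 3) := by
      rw [hdD] at hkey
      have e : R ^ 6 = (R ^ 2) ^ 3 := by ring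
      have e4 : R ^ 4 = (R ^ 2) ^ 2 := by ring
      rw [e, e4, ← hrB] at hkey
      rw [← hrB]
      linear_combination hkey
    exact mul_left_cancel₀ (by positivity) this
  have hds : d = r₀ + B - 3 * xp := by linarith
  have hp' : (xp - r₀) * (xp - B) + xp * (2 * xp - r₀ - B) = 0 := by
    rw [hds, ← hrB] at hd2
    linear_combination hd2 / 3
  have hpk : xp * (xp - r₀) * (xp - B) = c * (r₀ - B) := by
    have h3 : d ^ 3 = d * ((r₀ + B) ^ 2 - 3 * R ^ 2) := by rw [← hd2]; ring
    have h4 := hp'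
    rw [h3, hds, ← hrB] at hk
    linear_combination -hk / 27 + (xp / 3 - (r₀ + B) / 9) * h4
  have hkpos : 0 < c * (r₀ - B) := mul_pos_of_neg_of_neg hcneg (by linarith)
  have hane : xp - r₀ ≠ 0 := by
    intro h; rw [h] at hpk; linarith
  have hbne : xp - B ≠ 0 := by
    intro h; rw [h] at hpk; linarith
  have hone : c * (1 / (xp - r₀) ^ 2 - 1 / (xp - B) ^ 2) = -1 := by
    have hab : (xp - r₀) * (xp - B) = - (xp * (2 * xp - r₀ - B)) := by linarith
    field_simp
    linear_combination (-(2 * xp - r₀ - B)) * hpk + (xp - r₀) * (xp - B) * hp'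
  have key0 : ∀ x, x - r₀ ≠ 0 → x - B ≠ 0 →
      x - c * ((x - r₀) / ((x - r₀) ^ 2 + 0 ^ 2) - (x - B) / ((x - B) ^ 2 + 0 ^ 2)) =
      (x * (x - r₀) * (x - B) - c * (r₀ - B)) / ((x - r₀) * (x - B)) := by
    intro x h1 h2
    simp only [ne_eq, OfNat.ofNat_ne_zero, not_false_eq_true, zero_pow, add_zero]
    field_simp
    ring
  have hJ : jacobianMatrix X xp 0 = !![0, -2 * θ₀; 0, 0] := by
    have ha2 : (xp - r₀) ^ 2 + (0:ℝ) ^ 2 ≠ 0 := by positivity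
    have hb2 : (xp - B) ^ 2 + (0:ℝ) ^ 2 ≠ 0 := by positivity
    have j11 : deriv (fun s => (X s 0).1) xp = 0 := by
      simp [hX]
    have hA : HasDerivAt (fun s : ℝ => (xp - r₀) ^ 2 + s ^ 2) 0 0 := by
      simpa using ((hasDerivAt_id (0:ℝ)).pow 2).const_add ((xp - r₀) ^ 2)
    have hBd : HasDerivAt (fun s : ℝ => (xp - B) ^ 2 + s ^ 2) 0 0 := by
      simpa using ((hasDerivAt_id (0:ℝ)).pow 2).const_add ((xp - B) ^ 2)
    have j12 : deriv (fun s => (X xp s).1) 0 = -2 * θ₀ := by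
      simp only [hX]
      have h := ((hasDerivAt_id (0:ℝ)).const_mul (-θ₀)).add
        (((hasDerivAt_id (0:ℝ)).const_mul (c * θ₀)).mul
          (((hasDerivAt_const (0:ℝ) (1:ℝ)).div hA ha2).sub
            ((hasDerivAt_const (0:ℝ) (1:ℝ)).div hBd hb2)))
      refine (HasDerivAt.deriv (h.congr_deriv ?_) :)
      simp
      simp only [one_div] at hone
      linear_combination θ₀ * hone
    have j22 : deriv (fun s => (X xp s).2) 0 = 0 := by
      simp only [hX]
      have h := ((((hasDerivAt_const (0:ℝ) (xp - r₀)).div hA ha2).sub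
            ((hasDerivAt_const (0:ℝ) (xp - B)).div hBd hb2)).const_mul (c * θ₀)).const_sub (θ₀ * xp)
      refine (HasDerivAt.deriv (h.congr_deriv ?_) :)
      simp
    have j21 : deriv (fun s => (X s 0).2) xp = 0 := by
      simp only [hX]
      have da := (hasDerivAt_id xp).sub_const r₀
      have db := (hasDerivAt_id xp).sub_const B
      have h := ((hasDerivAt_id xp).const_mul θ₀).sub
        (((da.div ((da.pow 2).add_const ((0:ℝ) ^ 2)) ha2).sub
            (db.div ((db.pow 2).add_const ((0:ℝ) ^ 2)) hb2)).const_mul (c * θ₀))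
      refine (HasDerivAt.deriv (h.congr_deriv ?_) :)
      have e : ∀ t : ℝ, t ≠ 0 → (t ^ 2 - t * (2 * t)) / (t ^ 2) ^ 2 = - (1 / t ^ 2) := by
        intro t ht; field_simp; ring
      simp
      rw [e _ hane, e _ hbne]
      linear_combination θ₀ * hone
    rw [jacobianMatrix, j11, j12, j21, j22]
  refine ⟨?_, ?_, ?_, ?_, ?_, ?_⟩
  · rw [hX]
    have h := key0 xp hane hbne
    rw [hpk, sub_self, zero_div] at h
    ext
    · simp
    · show θ₀ * xp - c * θ₀ * _ = 0
      linear_combination θ₀ * h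
  · intro x y hxy hne hXx
    rw [hX] at hXx
    obtain ⟨h1, h2⟩ := Prod.mk.inj hXx
    have hxR : x ≤ R := by nlinarith [sq_nonneg y]
    by_cases hy : y = 0
    · subst hy
      have hxr : x - r₀ ≠ 0 := by
        intro h; exact hne (by rw [sub_eq_zero.1 h])
      have hxB : x - B ≠ 0 := by
        intro h; linarith
      have h := key0 x hxr hxB
      have h0 : x - c * ((x - r₀) / ((x - r₀) ^ 2 + 0 ^ 2) - (x - B) / ((x - B) ^ 2 + 0 ^ 2)) = 0 := by
        apply mul_left_cancel₀ hθ
        linear_combination h2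
      rw [h0] at h
      have h' := (div_eq_zero_iff.1 h.symm).resolve_right (mul_ne_zero hxr hxB)
      have hfac : (x - xp) ^ 2 * (x - (r₀ + B - 2 * xp)) = 0 := by
        linear_combination h' - hpk + (x - xp) * (-1) * hp'
      have hq : x - (r₀ + B - 2 * xp) ≠ 0 := by
        have : x - (r₀ + B - 2 * xp) < 0 := by linarith
        exact this.ne
      have := (mul_eq_zero.1 hfac).resolve_right hq
      have := pow_eq_zero_iff (two_ne_zero) |>.1 this
      rw [sub_eq_zero.1 this]
    · exfalso
      have hA : 0 < (x - r₀) ^ 2 + y ^ 2 := by positivity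
      have hlt : (x - r₀) ^ 2 + y ^ 2 < (x - B) ^ 2 + y ^ 2 := by
        nlinarith [mul_pos (show 0 < B - r₀ by linarith) (show 0 < r₀ + B - 2 * x by linarith)]
      have hinv := one_div_lt_one_div_of_lt hA hlt
      have h3 : c * (1 / ((x - r₀) ^ 2 + y ^ 2) - 1 / ((x - B) ^ 2 + y ^ 2)) = 1 := by
        apply mul_left_cancel₀ (mul_ne_zero hθ hy)
        linear_combination h1
      have := mul_neg_of_neg_of_pos hcneg (sub_pos.2 hinv)
      linarith
  · rw [hJ]
    intro h
    have := congrFun (congrFun h 0) 1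
    simp [hθ] at this
  · rw [hJ]
    refine ⟨2, ?_⟩
    rw [pow_two]
    ext i j
    fin_cases i <;> fin_cases j <;> simp [Matrix.mul_apply]
  · rw [hJ]; simp [Matrix.det_fin_two]
  · rw [hJ]; simp [Matrix.trace_fin_two]
end
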